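/- Suppose d is an intrinsic metric on S such that for every i ∈ I and every continuous map γ : [0,1] → D one has L(γ, d[l^{(i)}]) = L(σᵢ ∘ γ, d). Then d = d[l]; that is, d[l] is the unique intrinsic metric on S preserving the lengths of curves on the Euclidean triangles. -/

import Mathlib

noncomputable section

open Set
open scoped ENNReal

/-- The Euclidean plane `ℝ²` with the Euclidean metric. -/
abbrev E2 : Type := EuclideanSpace ℝ (Fin 2)

/-- Vertices of the fixed closed regular (equilateral) triangle of side length 1. -/
def p0 : E2 := !₂[0, 0]
def p1 : E2 := !₂[1, 0]
def p2 : E2 := !₂[1 / 2, Real.sqrt 3 / 2]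

/-- `Dtri` is the fixed closed regular triangle in `ℝ²` with edge length 1. -/
def Dtri : Set E2 := convexHull ℝ {p0, p1, p2}

/-- `V0` is the set of the three vertices of `Dtri`. -/
def V0 : Set E2 := {p0, p1, p2}

/-- The three closed edges of `Dtri`. -/
def e01 : Set E2 := segment ℝ p0 p1
def e12 : Set E2 := segment ℝ p1 p2
def e02 : Set E2 := segment ℝ p0 p2

/-- `E0` is the set of the three closed edges of `Dtri`. -/
def E0 : Set (Set E2) := {e01, e12, e02}

/-- The open edge `e° = e ∖ V₀`. -/
def eo (e : Set E2) : Set E2 := e \ V0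

/-- `Do = D°` is the interior of `Dtri` in `ℝ²`. -/
def Do : Set E2 := interior Dtri

/-- `l : E₀ → ℝ` is positive and satisfies the strict triangle inequalities:
`l e₁ + l e₂ > l e₃` whenever `{e₁, e₂, e₃} = E₀`. -/
def TriIneq (l : Set E2 → ℝ) : Prop :=
  (∀ e ∈ E0, 0 < l e) ∧
  ∀ e₁ e₂ e₃ : Set E2, ({e₁, e₂, e₃} : Set (Set E2)) = E0 → l e₁ + l e₂ > l e₃

/-- A linear map `f : ℝ² → ℝ²` realizes the edge lengths `l`, i.e. for each `e ∈ E₀`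
the segment `f(e)` has Euclidean length `l e`. -/
def Realizes (f : E2 →ₗ[ℝ] E2) (l : Set E2 → ℝ) : Prop :=
  dist (f p0) (f p1) = l e01 ∧ dist (f p1) (f p2) = l e12 ∧ dist (f p0) (f p2) = l e02

/-- The metric `d[l]` on `Dtri`, defined by `d[l](x,y) = |f x - f y|₂` for a linear map `f`
realizing the edge lengths `l` (this is independent of the choice of `f`). -/
def dD (l : Set E2 → ℝ) (x y : E2) : ℝ :=
  letI := Classical.propDecidable (∃ f : E2 →ₗ[ℝ] E2, Realizes f l)
  if h : ∃ f : E2 →ₗ[ℝ] E2, Realizes f l then dist (h.choose x) (h.choose y) else 0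

/-- A triangulation `T = (σᵢ)_{i ∈ I}`, `I = Fin n`, of a topological space `S`:
a finite family of continuous maps `σᵢ : Dtri → S` such that
(a) `σᵢ` is injective on each open edge, (b) `σᵢ` is injective on `D°`,
(c) `S` is the disjoint union of `⋃ᵢ σᵢ(V₀)`, the sets `σᵢ(D°)`, and the distinct sets
among the `σᵢ(e°)`, and (d) glued edges are identified by a linear homeomorphism. -/
structure Triangulation (S : Type) [TopologicalSpace S] (n : ℕ) where
  σ : Fin n → E2 → S
  continuousOn : ∀ i, ContinuousOn (σ i) Dtri
  inj_edge : ∀ i, ∀ e ∈ E0, InjOn (σ i) (eo e)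
  inj_int : ∀ i, InjOn (σ i) Do
  cover : (⋃ i, σ i '' V0) ∪ (⋃ i, σ i '' Do) ∪ (⋃ i, ⋃ e ∈ E0, σ i '' eo e) = univ
  disj_int : ∀ i j, i ≠ j → Disjoint (σ i '' Do) (σ j '' Do)
  disj_vert_int : ∀ j, Disjoint (⋃ i, σ i '' V0) (σ j '' Do)
  disj_vert_edge : ∀ j, ∀ e ∈ E0, Disjoint (⋃ i, σ i '' V0) (σ j '' eo e)
  disj_int_edge : ∀ i j, ∀ e ∈ E0, Disjoint (σ i '' Do) (σ j '' eo e)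
  edge_eq_or_disjoint : ∀ i j, ∀ e ∈ E0, ∀ e' ∈ E0,
    σ i '' eo e = σ j '' eo e' ∨ Disjoint (σ i '' eo e) (σ j '' eo e')
  glue : ∀ i j, ∀ e ∈ E0, ∀ e' ∈ E0, σ i '' eo e = σ j '' eo e' →
    ∃ A : E2 →ᵃ[ℝ] E2, A '' e = e' ∧ ∀ x ∈ e, σ j (A x) = σ i x

variable {S : Type} [TopologicalSpace S] {n : ℕ}

/-- `l ∈ ℝ^{E(T)}_Δ`: `l` assigns positive lengths to the edges of `T` satisfying the
strict triangle inequalities in each triangle. -/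
def TriIneqT (T : Triangulation S n) (l : Set S → ℝ) : Prop :=
  (∀ (i : Fin n), ∀ e ∈ E0, 0 < l (T.σ i '' e)) ∧
  ∀ (i : Fin n), ∀ e₁ e₂ e₃ : Set E2, ({e₁, e₂, e₃} : Set (Set E2)) = E0 →
    l (T.σ i '' e₁) + l (T.σ i '' e₂) > l (T.σ i '' e₃)

/-- The restricted edge lengths `l^{(i)}` on the triangle `σᵢ(D)`: `l^{(i)}_e = l_{σᵢ(e)}`. -/
def lRes (T : Triangulation S n) (l : Set S → ℝ) (i : Fin n) : Set E2 → ℝ :=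
  fun e => l (T.σ i '' e)

/-- `dᵢ(x,y) = min { d[l^{(i)}](x',y') : x' ∈ σᵢ⁻¹(x), y' ∈ σᵢ⁻¹(y) }` for `x, y ∈ σᵢ(D)`. -/
def dTri (T : Triangulation S n) (l : Set S → ℝ) (i : Fin n) (x y : S) : ℝ :=
  sInf { r | ∃ x' ∈ Dtri, ∃ y' ∈ Dtri,
    T.σ i x' = x ∧ T.σ i y' = y ∧ r = dD (lRes T l i) x' y' }

/-- The set of sums `Σ_j d_{i_j}(x_{j-1}, x_j)` over chains from `x` to `y`. -/
def chainSums (T : Triangulation S n) (l : Set S → ℝ) (x y : S) : Set ℝ :=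
  { r | ∃ (k : ℕ) (c : ℕ → S) (idx : ℕ → Fin n),
      c 0 = x ∧ c k = y ∧
      (∀ j < k, c j ∈ T.σ (idx j) '' Dtri ∧ c (j + 1) ∈ T.σ (idx j) '' Dtri) ∧
      r = ∑ j ∈ Finset.range k, dTri T l (idx j) (c j) (c (j + 1)) }

/-- The glued metric `d[l]` on `S`. -/
def dGlue (T : Triangulation S n) (l : Set S → ℝ) (x y : S) : ℝ :=
  sInf (chainSums T l x y)

/-- The length `L(γ, d)` of a curve `γ : [0,1] → X` with respect to a metric `d`:
`L(γ,d) = sup { Σ_j d(γ t_{j-1}, γ t_j) : 0 = t₀ < t₁ < ... < t_k = 1 }`, valued in `[0,∞]`. -/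
def pathLen {X : Type} (d : X → X → ℝ) (γ : ℝ → X) : ℝ≥0∞ :=
  ⨆ (k : ℕ) (t : Fin (k + 1) → ℝ) (_ : StrictMono t ∧ t 0 = 0 ∧ t (Fin.last k) = 1),
    ENNReal.ofReal (∑ j : Fin k, d (γ (t j.castSucc)) (γ (t j.succ)))

/-!
Straight segments in the triangles have the same length for `d` and for the Euclidean metrics, so
`d ≤ d[l]`. Conversely, let `G` be a function on `S` that does not expand distances within any
Euclidean triangle, such as `d[l](x, ·)`; then `G` changes along a curve `γ` by at most `L(γ, d)`.
While `γ` stays in an open triangle this is clear, since `γ` lifts to the triangle. The times that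
`γ` spends on an edge may form a Cantor set, but near an interior point of the edge, an excursion
that leaves the edge and returns to it is never shorter than the part of the edge between its
endpoints. Hence `γ` is there at least as long as the part of the edge between its first and last
visit, traversed once. The finitely many vertices are passed by cutting `γ` at its first and last
visit to each of them. Since `d` is intrinsic, taking the infimum over `γ` gives `d[l] ≤ d`.
-/

/-! ### Variation of curves -/

section Variation

variable {Y : Type*} [PseudoEMetricSpace Y]

lemma eVariationOn_Icc_add_Icc (F : ℝ → Y) {a b c : ℝ} (hab : a ≤ b) (hbc : b ≤ c) :
    eVariationOn F (Icc a b) + eVariationOn F (Icc b c) = eVariationOn F (Icc a c) := by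
  simpa using eVariationOn.Icc_add_Icc F (s := univ) hab hbc (mem_univ b)

lemma edist_le_eVariationOn_Icc (F : ℝ → Y) {a b : ℝ} (hab : a ≤ b) :
    edist (F a) (F b) ≤ eVariationOn F (Icc a b) :=
  eVariationOn.edist_le F (left_mem_Icc.2 hab) (right_mem_Icc.2 hab)

lemma eVariationOn_comp_lineMap (F : ℝ → Y) {s t : ℝ} (hst : s ≤ t) :
    eVariationOn (F ∘ AffineMap.lineMap s t) (Icc (0 : ℝ) 1) = eVariationOn F (Icc s t) := by
  rw [eVariationOn.comp_eq_of_monotoneOn F _ ((AffineMap.lineMap_mono hst).monotoneOn _),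
    ← segment_eq_image_lineMap, segment_eq_Icc hst]

lemma eVariationOn_range_fin {α : Type*} [LinearOrder α] (F : α → Y) {k : ℕ}
    {t : Fin (k + 1) → α} (ht : Monotone t) :
    eVariationOn F (range t) = ∑ j : Fin k, edist (F (t j.castSucc)) (F (t j.succ)) := by
  let u : ℕ → α := fun i => t ⟨min i k, by omega⟩
  have hu : Monotone u := fun i j hij => ht (Fin.mk_le_mk.2 (min_le_min_right k hij))
  have hut (j : Fin (k + 1)) : u j = t j := congrArg t (Fin.ext (min_eq_left (by omega)))
  have hrange : range t = u '' Iic k := by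
    ext x
    constructor
    · rintro ⟨j, rfl⟩
      exact ⟨j, Nat.le_of_lt_succ j.2, hut j⟩
    · rintro ⟨i, -, rfl⟩
      exact mem_range_self _
  rw [hrange, eVariationOn.image_range_of_monotone F hu, Finset.sum_range]
  exact Finset.sum_congr rfl fun j _ => by rw [← hut j.castSucc, ← hut j.succ]; rfl

lemma exists_strictMono_fin_of_isLeast_of_isGreatest {α : Type*} [LinearOrder α] {P : Finset α}
    {a b : α} (ha : IsLeast (P : Set α) a) (hb : IsGreatest (P : Set α) b) :
    ∃ (k : ℕ) (t : Fin (k + 1) → α), StrictMono t ∧ t 0 = a ∧ t (Fin.last k) = b ∧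
      range t = P := by
  obtain ⟨k, hk⟩ : ∃ k, P.card = k + 1 :=
    Nat.exists_eq_succ_of_ne_zero (Finset.card_ne_zero_of_mem (Finset.mem_coe.1 ha.1))
  refine ⟨k, P.orderEmbOfFin hk, (P.orderEmbOfFin hk).strictMono, ?_, ?_,
    Finset.range_orderEmbOfFin P hk⟩
  · exact (Finset.orderEmbOfFin_zero hk k.succ_pos).trans ((Finset.isLeast_min' P _).unique ha)
  · exact (Finset.orderEmbOfFin_last hk k.succ_pos).trans ((Finset.isGreatest_max' P _).unique hb)

lemma pathLen_dist_eq_eVariationOn {Y : Type} [PseudoMetricSpace Y] (γ : ℝ → Y) :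
    pathLen dist γ = eVariationOn γ (Icc 0 1) := by
  have hsum {k : ℕ} {t : Fin (k + 1) → ℝ} (ht : StrictMono t) :
      ENNReal.ofReal (∑ j : Fin k, dist (γ (t j.castSucc)) (γ (t j.succ))) =
        eVariationOn γ (range t) := by
    simp only [eVariationOn_range_fin γ ht.monotone, edist_dist,
      ENNReal.ofReal_sum_of_nonneg fun _ _ => dist_nonneg]
  apply le_antisymm
  · refine iSup_le fun k => iSup_le fun t => iSup_le fun ⟨ht, h0, h1⟩ => ?_
    rw [hsum ht, ← h0, ← h1]
    exact eVariationOn.mono γ (range_subset_iff.2 fun j =>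
      ⟨ht.monotone (Fin.zero_le j), ht.monotone (Fin.le_last j)⟩)
  · refine iSup_le fun ⟨m, u, hu, hmem⟩ => ?_
    let P : Finset ℝ := insert 0 (insert 1 ((Finset.range (m + 1)).image u))
    have hP : (P : Set ℝ) ⊆ Icc 0 1 := fun x hx => by
      simp only [P, Finset.coe_insert, Finset.coe_image, mem_insert_iff] at hx
      obtain rfl | rfl | ⟨i, -, rfl⟩ := hx
      exacts [left_mem_Icc.2 zero_le_one, right_mem_Icc.2 zero_le_one, hmem i]
    obtain ⟨k, t, ht, h0, h1, hrange⟩ :=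
      exists_strictMono_fin_of_isLeast_of_isGreatest (P := P) (a := 0) (b := 1)
        ⟨by simp [P], fun x hx => (hP hx).1⟩ ⟨by simp [P], fun x hx => (hP hx).2⟩
    refine le_trans ?_ (le_iSup_of_le k (le_iSup_of_le t (le_iSup_of_le ⟨ht, h0, h1⟩ le_rfl)))
    rw [hsum ht, hrange]
    simp only [edist_comm (γ (u (_ + 1)))]
    rw [← eVariationOn.image_range_of_monotone γ hu]
    refine eVariationOn.mono γ (image_subset_iff.2 fun i hi => ?_)
    exact Finset.mem_insert_of_mem (Finset.mem_insert_of_mem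
      (Finset.mem_image_of_mem u (Finset.mem_range_succ_iff.2 hi)))

lemma eVariationOn_le_of_add_edist_le {α : Type*} [LinearOrder α] {ψ : α → Y} {s : Set α}
    {Φ : α → ℝ≥0∞} {C : ℝ≥0∞}
    (hΦ : ∀ v ∈ s, ∀ w ∈ s, v ≤ w → Φ v + edist (ψ v) (ψ w) ≤ Φ w) (hC : ∀ v ∈ s, Φ v ≤ C) :
    eVariationOn ψ s ≤ C := by
  refine iSup_le fun ⟨m, u, hu, hmem⟩ => le_trans ?_ (hC _ (hmem m))
  induction m with
  | zero => simp
  | succ m ih =>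
    rw [Finset.sum_range_succ, edist_comm]
    exact (add_le_add_left ih _).trans (hΦ _ (hmem m) _ (hmem _) (hu m.le_succ))

lemma eVariationOn_lineMap_eq_edist {E : Type*} [NormedAddCommGroup E] [NormedSpace ℝ E] (x y : E)
    {s t : ℝ} (hst : s ≤ t) :
    eVariationOn (AffineMap.lineMap x y : ℝ → E) (Icc s t) =
      edist (AffineMap.lineMap x y s) (AffineMap.lineMap x y t) := by
  have hdist {v w : ℝ} (hvw : v ≤ w) :
      edist (AffineMap.lineMap x y v) (AffineMap.lineMap x y w) =
        ENNReal.ofReal ((w - v) * dist x y) := by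
    rw [edist_dist, dist_lineMap_lineMap, dist_comm v w, Real.dist_eq,
      abs_of_nonneg (sub_nonneg.2 hvw)]
  refine le_antisymm ?_ (edist_le_eVariationOn_Icc _ hst)
  refine eVariationOn_le_of_add_edist_le (Φ := fun v => ENNReal.ofReal ((v - s) * dist x y))
    (fun v hv w _ hvw => ?_) fun v hv => ?_
  · have hv0 : 0 ≤ (v - s) * dist x y := mul_nonneg (sub_nonneg.2 hv.1) dist_nonneg
    have hw0 : 0 ≤ (w - v) * dist x y := mul_nonneg (sub_nonneg.2 hvw) dist_nonneg
    rw [hdist hvw, ← ENNReal.ofReal_add hv0 hw0, ← add_mul]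
    exact ENNReal.ofReal_le_ofReal (by ring_nf; rfl)
  · rw [hdist hst]
    gcongr
    exact hv.2

end Variation

section FirstPassage

-- `τ v` is the first time in `K` at which `h` reaches level `v`, and `α v` the last one before it.
lemma exists_first_passage {K : Set ℝ} (hK : IsCompact K) {a b : ℝ} (ha : IsLeast K a) (hb : b ∈ K)
    {h : ℝ → ℝ} (hh : ContinuousOn h K) :
    ∃ α τ : ℝ → ℝ, ∀ v ∈ Icc (h a) (h b), α v ∈ K ∧ τ v ∈ K ∧ α v ≤ τ v ∧ h (α v) ≤ v ∧
      v ≤ h (τ v) ∧ Disjoint K (Ioo (α v) (τ v)) ∧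
      ∀ w ∈ Icc v (h b), α v = α w ∧ τ v = τ w ∨ τ v ≤ α w := by
  let B : ℝ → Set ℝ := fun v => K ∩ h ⁻¹' Ici v
  let τ : ℝ → ℝ := fun v => sInf (B v)
  let A : ℝ → Set ℝ := fun v => {s ∈ K | s = a ∨ s < τ v}
  let α : ℝ → ℝ := fun v => sSup (A v)
  have hKlow (v : ℝ) : IsClosed (K ∩ h ⁻¹' Iic v) :=
    hh.preimage_isClosed_of_isClosed hK.isClosed isClosed_Iic
  have hBbdd (v : ℝ) : BddBelow (B v) := hK.bddBelow.mono inter_subset_left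
  have hAbdd (v : ℝ) : BddAbove (A v) := hK.bddAbove.mono fun s hs => hs.1
  have hτ {v : ℝ} (hv : v ∈ Icc (h a) (h b)) : τ v ∈ B v :=
    (hh.preimage_isClosed_of_isClosed hK.isClosed isClosed_Ici).csInf_mem ⟨b, hb, hv.2⟩ (hBbdd v)
  have hlt {v s : ℝ} (hs : s ∈ K) (hsv : s < τ v) : h s < v :=
    lt_of_not_ge fun hvs => hsv.not_ge (csInf_le (hBbdd v) ⟨hs, hvs⟩)
  have hα {v : ℝ} (hv : v ∈ Icc (h a) (h b)) : α v ∈ K ∩ h ⁻¹' Iic v := by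
    refine closure_minimal ?_ (hKlow v) (csSup_mem_closure ⟨a, ha.1, Or.inl rfl⟩ (hAbdd v))
    rintro s ⟨hs, rfl | hsv⟩
    exacts [⟨hs, hv.1⟩, ⟨hs, (hlt hs hsv).le⟩]
  have hle_α {v s : ℝ} (hs : s ∈ K) (hsv : s < τ v) : s ≤ α v := le_csSup (hAbdd v) ⟨hs, Or.inr hsv⟩
  refine ⟨α, τ, fun v hv => ⟨(hα hv).1, (hτ hv).1, ?_, (hα hv).2, (hτ hv).2, ?_, fun w hw => ?_⟩⟩
  · refine csSup_le ⟨a, ha.1, Or.inl rfl⟩ ?_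
    rintro s ⟨-, rfl | hsv⟩
    exacts [ha.2 (hτ hv).1, hsv.le]
  · exact disjoint_left.2 fun s hs hsv => hsv.1.not_ge (hle_α hs hsv.2)
  · have hw' : w ∈ Icc (h a) (h b) := ⟨hv.1.trans hw.1, hw.2⟩
    have hτ_le : τ v ≤ τ w := csInf_le (hBbdd v) ⟨(hτ hw').1, hw.1.trans (hτ hw').2⟩
    rcases hτ_le.eq_or_lt with heq | hτlt
    · exact Or.inl ⟨by simp only [α, A, heq], heq⟩
    · exact Or.inr (hle_α (hτ hv).1 hτlt)

variable {Y : Type*} [PseudoEMetricSpace Y] {K : Set ℝ} {a b : ℝ} {h : ℝ → ℝ} {ψ Γ : ℝ → Y}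

lemma edist_le_eVariationOn_Icc_add_add {s t v w : ℝ} (hs : Γ s = ψ (h s)) (ht : Γ t = ψ (h t))
    (hvs : v ≤ h s) (hst : s ≤ t) (htw : h t ≤ w) :
    edist (ψ v) (ψ w) ≤ eVariationOn ψ (Icc v (h s)) + eVariationOn Γ (Icc s t) +
      eVariationOn ψ (Icc (h t) w) := by
  refine (edist_triangle4 _ (Γ s) (Γ t) _).trans (add_le_add_three ?_
    (edist_le_eVariationOn_Icc Γ hst) ?_)
  · exact hs ▸ edist_le_eVariationOn_Icc ψ hvs
  · exact ht ▸ edist_le_eVariationOn_Icc ψ htw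

lemma eVariationOn_Icc_le_of_gap_le (hK : IsCompact K) (ha : IsLeast K a) (hb : IsGreatest K b)
    (hh : ContinuousOn h K) (hΓ : EqOn Γ (ψ ∘ h) K)
    (hgap : ∀ α ∈ K, ∀ β ∈ K, α ≤ β → Disjoint K (Ioo α β) →
      eVariationOn ψ (Icc (h α) (h β)) ≤ eVariationOn Γ (Icc α β)) :
    eVariationOn ψ (Icc (h a) (h b)) ≤ eVariationOn Γ (Icc a b) := by
  obtain ⟨α, τ, hατ⟩ := exists_first_passage hK ha hb.1 hh
  have hpass {v : ℝ} (hv : v ∈ Icc (h a) (h b)) :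
      eVariationOn Γ (Icc a (α v)) + (eVariationOn ψ (Icc (h (α v)) v) +
        eVariationOn ψ (Icc v (h (τ v)))) ≤ eVariationOn Γ (Icc a (τ v)) := by
    obtain ⟨hα, hτ, hle, hαv, hvτ, hdisj, -⟩ := hατ v hv
    rw [eVariationOn_Icc_add_Icc ψ hαv hvτ, ← eVariationOn_Icc_add_Icc Γ (ha.2 hα) hle]
    gcongr
    exact hgap _ hα _ hτ hle hdisj
  refine eVariationOn_le_of_add_edist_le
    (Φ := fun v => eVariationOn Γ (Icc a (α v)) + eVariationOn ψ (Icc (h (α v)) v))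
    (fun v hv w hw hvw => ?_) fun v hv => ?_
  · obtain ⟨-, hτ, -, hαv, hvτ, -, hnext⟩ := hατ v hv
    obtain ⟨hα', -, -, hαw, -, -, -⟩ := hατ w hw
    rcases hnext w ⟨hvw, hw.2⟩ with ⟨heq, -⟩ | hle
    · rw [← heq, ← eVariationOn_Icc_add_Icc ψ hαv hvw, add_assoc]
      gcongr
      exact edist_le_eVariationOn_Icc ψ hvw
    · have hvw4 := edist_le_eVariationOn_Icc_add_add (hΓ hτ) (hΓ hα') hvτ hle hαw
      calc _ ≤ eVariationOn Γ (Icc a (α v)) + (eVariationOn ψ (Icc (h (α v)) v) +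
              eVariationOn ψ (Icc v (h (τ v)))) + eVariationOn Γ (Icc (τ v) (α w)) +
              eVariationOn ψ (Icc (h (α w)) w) := by
            refine (add_le_add_right hvw4 _).trans (le_of_eq ?_)
            ring
        _ ≤ eVariationOn Γ (Icc a (τ v)) + eVariationOn Γ (Icc (τ v) (α w)) +
              eVariationOn ψ (Icc (h (α w)) w) := by
            gcongr
            exact hpass hv
        _ = _ := by rw [eVariationOn_Icc_add_Icc Γ (ha.2 hτ) hle]
  · have hτb : τ v ≤ b := hb.2 (hατ v hv).2.1
    refine le_trans ?_ ((hpass hv).trans (eVariationOn.mono Γ (Icc_subset_Icc_right hτb)))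
    gcongr
    exact le_self_add

lemma eVariationOn_uIcc_le_of_gap_le (hK : IsCompact K) (ha : IsLeast K a) (hb : IsGreatest K b)
    (hh : ContinuousOn h K) (hΓ : EqOn Γ (ψ ∘ h) K)
    (hgap : ∀ α ∈ K, ∀ β ∈ K, α ≤ β → Disjoint K (Ioo α β) →
      eVariationOn ψ (uIcc (h α) (h β)) ≤ eVariationOn Γ (Icc α β)) :
    eVariationOn ψ (uIcc (h a) (h b)) ≤ eVariationOn Γ (Icc a b) := by
  rcases le_total (h a) (h b) with hab | hba
  · rw [uIcc_of_le hab]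
    exact eVariationOn_Icc_le_of_gap_le hK ha hb hh hΓ fun α hα β hβ hαβ hdisj =>
      (eVariationOn.mono ψ Icc_subset_uIcc).trans (hgap α hα β hβ hαβ hdisj)
  · have hneg (c d : ℝ) :
        eVariationOn (ψ ∘ Neg.neg) (Icc (-c) (-d)) = eVariationOn ψ (Icc d c) := by
      rw [eVariationOn.comp_eq_of_antitoneOn ψ _ fun _ _ _ _ => neg_le_neg, image_neg_eq_neg,
        neg_Icc, neg_neg, neg_neg]
    rw [uIcc_of_ge hba, ← hneg]
    refine eVariationOn_Icc_le_of_gap_le hK ha hb hh.neg (fun t ht => ?_)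
      fun α hα β hβ hαβ hdisj => ?_
    · simpa using hΓ ht
    · exact (hneg _ _).trans_le
        ((eVariationOn.mono ψ Icc_subset_uIcc').trans (hgap α hα β hβ hαβ hdisj))

end FirstPassage

/-! ### Functions that expand no curve -/

section CurveNonexpanding

variable {X : Type*} [TopologicalSpace X]
variable {Y Z : Type*} [PseudoEMetricSpace Y] [PseudoEMetricSpace Z]

lemma edist_le_eVariationOn_of_split {F : ℝ → Z} {Γ : ℝ → Y} {a α β b : ℝ} (haα : a ≤ α)
    (hαβ : α ≤ β) (hβb : β ≤ b) (h₁ : edist (F a) (F α) ≤ eVariationOn Γ (Icc a α))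
    (h₂ : edist (F α) (F β) ≤ eVariationOn Γ (Icc α β))
    (h₃ : edist (F β) (F b) ≤ eVariationOn Γ (Icc β b)) :
    edist (F a) (F b) ≤ eVariationOn Γ (Icc a b) := by
  rw [← eVariationOn_Icc_add_Icc Γ (haα.trans hαβ) hβb, ← eVariationOn_Icc_add_Icc Γ haα hαβ]
  exact (edist_triangle4 _ (F α) (F β) _).trans (add_le_add_three h₁ h₂ h₃)

lemma edist_le_eVariationOn_of_isCompact {F : ℝ → Z} {Γ : ℝ → Y} {a b : ℝ} (hab : a ≤ b)
    {K : Set ℝ} (hK : IsCompact K) (hKab : K ⊆ Icc a b)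
    (hoff : ∀ s t, a ≤ s → s ≤ t → t ≤ b → Disjoint K (Ioo s t) →
      edist (F s) (F t) ≤ eVariationOn Γ (Icc s t))
    (hon : ∀ s ∈ K, ∀ t ∈ K, s ≤ t → edist (F s) (F t) ≤ eVariationOn Γ (Icc s t)) :
    edist (F a) (F b) ≤ eVariationOn Γ (Icc a b) := by
  rcases K.eq_empty_or_nonempty with rfl | hKne
  · exact hoff a b le_rfl hab le_rfl (empty_disjoint _)
  obtain ⟨α, hα, hαK⟩ := hK.exists_isLeast hKne
  obtain ⟨β, hβ, hβK⟩ := hK.exists_isGreatest hKne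
  refine edist_le_eVariationOn_of_split (hKab hα).1 (hαK hβ) (hKab hβ).2
    (hoff _ _ le_rfl (hKab hα).1 (hKab hα).2 ?_) (hon α hα β hβ (hαK hβ))
    (hoff _ _ (hKab hβ).1 (hKab hβ).2 le_rfl ?_)
  · exact disjoint_left.2 fun u hu huα => huα.2.not_ge (hαK hu)
  · exact disjoint_left.2 fun u hu huβ => huβ.1.not_ge (hβK hu)

lemma edist_le_eVariationOn_of_forall_Ioo {F : ℝ → Z} {Γ : ℝ → Y} {a b : ℝ} (hab : a ≤ b)
    (hF : ContinuousOn F (Icc a b))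
    (h : ∀ s t, a < s → s ≤ t → t < b → edist (F s) (F t) ≤ eVariationOn Γ (Icc s t)) :
    edist (F a) (F b) ≤ eVariationOn Γ (Icc a b) := by
  obtain rfl | hab := hab.eq_or_lt
  · simp
  obtain ⟨m, ham, hmb⟩ := exists_between hab
  have hleft : Filter.Tendsto F (nhdsWithin a (Ioo a m)) (nhds (F a)) :=
    (hF a (left_mem_Icc.2 hab.le)).mono_left
      (nhdsWithin_mono a fun s hs => ⟨hs.1.le, (hs.2.trans hmb).le⟩)
  have hright : Filter.Tendsto F (nhdsWithin b (Ioo m b)) (nhds (F b)) :=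
    (hF b (right_mem_Icc.2 hab.le)).mono_left
      (nhdsWithin_mono b fun s hs => ⟨(ham.trans hs.1).le, hs.2.le⟩)
  have := left_nhdsWithin_Ioo_neBot ham
  have := right_nhdsWithin_Ioo_neBot hmb
  refine le_of_tendsto ((hleft.comp Filter.tendsto_fst).edist (hright.comp Filter.tendsto_snd))
    ((Filter.Eventually.prod_mk self_mem_nhdsWithin self_mem_nhdsWithin).mono fun p hp => ?_)
  exact (h p.1 p.2 hp.1.1 (hp.1.2.trans hp.2.1).le hp.2.2).trans
    (eVariationOn.mono Γ (Icc_subset_Icc hp.1.1.le hp.2.2.le))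

/-- Along every curve in `N`, the function `G` changes by at most the length of the curve measured
through `q : X → Y`. -/
def CurveNonexpandingOn (q : X → Y) (G : X → Z) (N : Set X) : Prop :=
  ∀ ⦃γ : ℝ → X⦄ ⦃a b : ℝ⦄, a ≤ b → ContinuousOn γ (Icc a b) → MapsTo γ (Icc a b) N →
    edist (G (γ a)) (G (γ b)) ≤ eVariationOn (q ∘ γ) (Icc a b)

namespace CurveNonexpandingOn

variable {q : X → Y} {G : X → Z} {N : Set X}

lemma mono {M : Set X} (h : CurveNonexpandingOn q G N) (hMN : M ⊆ N) : CurveNonexpandingOn q G M :=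
  fun _ _ _ hab hγ hγM => h hab hγ (hγM.mono_right hMN)

lemma of_locally (h : ∀ x ∈ N, ∃ U, IsOpen U ∧ x ∈ U ∧ CurveNonexpandingOn q G U) :
    CurveNonexpandingOn q G N := by
  intro γ a b hab hγ hγN
  choose U hUo hxU hU using fun t : Icc a b => h (γ t) (hγN t.2)
  obtain ⟨t, ht0, htmono, ⟨m, hm⟩, hsub⟩ := exists_monotone_Icc_subset_open_cover_Icc hab
    (c := fun s : Icc a b => {t : Icc a b | γ t ∈ U s})
    (fun s => (hUo s).preimage (continuousOn_iff_continuous_domRestrict.1 hγ))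
    (fun s _ => mem_iUnion.2 ⟨s, hxU s⟩)
  have hpiece (k : ℕ) : edist (G (γ (t k))) (G (γ (t (k + 1)))) ≤
      eVariationOn (q ∘ γ) (Icc (t k) (t (k + 1))) := by
    obtain ⟨s, hs⟩ := hsub k
    exact hU s (htmono k.le_succ) (hγ.mono (Icc_subset_Icc (t k).2.1 (t (k + 1)).2.2))
      fun u hu => hs (a := ⟨u, (t k).2.1.trans hu.1, hu.2.trans (t (k + 1)).2.2⟩) hu
  have hinit (k : ℕ) : edist (G (γ a)) (G (γ (t k))) ≤ eVariationOn (q ∘ γ) (Icc a (t k)) := by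
    induction k with
    | zero => simp [ht0]
    | succ k ih =>
      exact edist_le_eVariationOn_of_split (F := G ∘ γ) (t k).2.1 le_rfl (htmono k.le_succ) ih
        (by simp) (hpiece k)
  simpa [hm m le_rfl] using hinit m

lemma edist_le_of_mapsTo_Ioo (h : CurveNonexpandingOn q G N) (hG : Continuous G) {γ : ℝ → X}
    {a b : ℝ} (hab : a ≤ b) (hγ : ContinuousOn γ (Icc a b)) (hγN : MapsTo γ (Ioo a b) N) :
    edist (G (γ a)) (G (γ b)) ≤ eVariationOn (q ∘ γ) (Icc a b) :=
  edist_le_eVariationOn_of_forall_Ioo (F := G ∘ γ) hab (hG.comp_continuousOn hγ)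
    fun _ _ hs hst ht => h hst (hγ.mono (Icc_subset_Icc hs.le ht.le))
      (hγN.mono_left fun _ hu => ⟨hs.trans_le hu.1, hu.2.trans_lt ht⟩)

lemma of_sdiff_of_isClosed (hG : Continuous G) {C : Set X} (hC : IsClosed C)
    (h : CurveNonexpandingOn q G (N \ C))
    (hon : ∀ ⦃γ : ℝ → X⦄ ⦃a b : ℝ⦄, a ≤ b → ContinuousOn γ (Icc a b) → MapsTo γ (Icc a b) N →
      γ a ∈ C → γ b ∈ C → edist (G (γ a)) (G (γ b)) ≤ eVariationOn (q ∘ γ) (Icc a b)) :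
    CurveNonexpandingOn q G N := by
  intro γ a b hab hγ hγN
  refine edist_le_eVariationOn_of_isCompact (F := G ∘ γ) (K := Icc a b ∩ γ ⁻¹' C) hab
    (isCompact_Icc.of_isClosed_subset (hγ.preimage_isClosed_of_isClosed isClosed_Icc hC)
      inter_subset_left) inter_subset_left (fun s t hs hst ht hdisj => ?_)
    fun s hs t ht hst => ?_
  · refine h.edist_le_of_mapsTo_Ioo hG hst (hγ.mono (Icc_subset_Icc hs ht)) fun u hu => ?_
    have hu' : u ∈ Icc a b := ⟨hs.trans hu.1.le, hu.2.le.trans ht⟩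
    exact ⟨hγN hu', fun huC => hdisj.notMem_of_mem_right hu ⟨hu', huC⟩⟩
  · have hsub : Icc s t ⊆ Icc a b := Icc_subset_Icc hs.1.1 ht.1.2
    exact hon hst (hγ.mono hsub) (hγN.mono_left hsub) hs.2 ht.2

lemma of_sdiff_singleton [T1Space X] (hG : Continuous G) {p : X}
    (h : CurveNonexpandingOn q G (N \ {p})) : CurveNonexpandingOn q G N := by
  refine of_sdiff_of_isClosed hG isClosed_singleton h fun γ a b _ _ _ ha hb => ?_
  rw [mem_singleton_iff.1 ha, mem_singleton_iff.1 hb, edist_self]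
  exact zero_le

lemma of_compl_finite [T1Space X] (hG : Continuous G) {W : Set X} (hW : W.Finite)
    (h : CurveNonexpandingOn q G Wᶜ) : CurveNonexpandingOn q G univ := by
  induction W, hW using Set.Finite.induction_on with
  | empty => rwa [compl_empty] at h
  | @insert p W _ _ ih =>
    refine ih (of_sdiff_singleton (p := p) hG ?_)
    rwa [sdiff_eq, ← compl_union, union_comm, ← insert_eq]

end CurveNonexpandingOn

end CurveNonexpanding

/-! ### Lifts through maps on compact sets -/

section Lifts

variable {X Z : Type*} [TopologicalSpace X] [TopologicalSpace Z] [T2Space Z] {σ : X → Z}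
  {C O : Set X}

lemma continuousOn_invFunOn_image [Nonempty X] (hC : IsCompact C) (hσ : ContinuousOn σ C)
    (hO : O ⊆ C) (hinj : InjOn σ O) (hsat : ∀ x ∈ C, σ x ∈ σ '' O → x ∈ O) :
    ContinuousOn (Function.invFunOn σ O) (σ '' O) := by
  rw [continuousOn_iff_isClosed]
  intro F hF
  refine ⟨σ '' (C ∩ F), ((hC.inter_right hF).image_of_continuousOn
    (hσ.mono inter_subset_left)).isClosed, ?_⟩
  ext z
  refine and_congr_left fun hz => ?_
  have hmem : Function.invFunOn σ O z ∈ O := Function.invFunOn_mem hz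
  have heq : σ (Function.invFunOn σ O z) = z := Function.invFunOn_eq hz
  constructor
  · exact fun hzF => ⟨_, ⟨hO hmem, hzF⟩, heq⟩
  · rintro ⟨x, ⟨hxC, hxF⟩, rfl⟩
    rwa [mem_preimage, ← hinj (hsat x hxC hz) hmem heq.symm]

lemma exists_tendsto_of_tendsto_comp_of_isCompact (hC : IsCompact C) (hσ : ContinuousOn σ C)
    {ι : Type*} {l : Filter ι} [l.NeBot] {g : ι → X} (hg : ∀ᶠ t in l, g t ∈ C) {z : Z}
    (hz : Filter.Tendsto (σ ∘ g) l (nhds z)) :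
    ∃ x ∈ C, σ x = z ∧ ∃ l' ≤ l, l'.NeBot ∧ Filter.Tendsto g l' (nhds x) := by
  have hle : (Ultrafilter.of l : Filter ι) ≤ l := Ultrafilter.of_le l
  have hgC : ((Ultrafilter.of l).map g : Filter X) ≤ Filter.principal C :=
    Filter.le_principal_iff.2 (hg.filter_mono hle)
  obtain ⟨x, hxC, hx⟩ := isCompact_iff_ultrafilter_le_nhds.1 hC _ hgC
  have hσx : Filter.Tendsto (σ ∘ g) (Ultrafilter.of l) (nhds (σ x)) :=
    (hσ x hxC).tendsto.comp
      (Filter.tendsto_inf.2 ⟨hx, Filter.tendsto_principal.2 (hg.filter_mono hle)⟩)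
  exact ⟨x, hxC, tendsto_nhds_unique hσx (hz.mono_left hle), _, hle, inferInstance, hx⟩

end Lifts

/-! ### Barycentric coordinates on the triangle -/

section Geometry

/-- The vertices of `Dtri`, indexed so that edges and barycentric coordinates can be treated
uniformly; indices are added modulo `3`. -/
def vertex : Fin 3 → E2 := ![p0, p1, p2]

/-- The closed edge of `Dtri` opposite to `vertex k`. -/
def edge (k : Fin 3) : Set E2 := segment ℝ (vertex (k + 1)) (vertex (k + 2))

lemma range_vertex : range vertex = V0 := by
  ext x
  simp [vertex, V0]
  tauto

lemma range_edge : range edge = E0 := by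
  ext e
  simp only [mem_range, Fin.exists_fin_succ, E0, mem_insert_iff, mem_singleton_iff, edge, vertex,
    e01, e12, e02, segment_symm ℝ p0 p2]
  simp [eq_comm]
  tauto

lemma affineIndependent_vertex : AffineIndependent ℝ vertex := by
  have h3 : √3 ≠ 0 := by positivity
  rw [vertex, affineIndependent_iff_not_collinear_set]
  intro h
  obtain ⟨v, hv⟩ := (collinear_iff_of_mem (p₀ := p0) (by simp)).1 h
  obtain ⟨r, hr⟩ := hv p1 (by simp)
  obtain ⟨s, hs⟩ := hv p2 (by simp)
  have hr0 : 1 = r * v 0 := by simpa [p0, p1] using congrArg (fun x : E2 => x 0) hr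
  have hr1 : r = 0 ∨ v 1 = 0 := by simpa [p0, p1] using congrArg (fun x : E2 => x 1) hr
  have hs1 : √3 / 2 = s * v 1 := by simpa [p0, p2] using congrArg (fun x : E2 => x 1) hs
  rcases hr1 with rfl | hv1
  · simp at hr0
  · simp [hv1, h3] at hs1

/-- The vertices of `Dtri` as an affine basis; its coordinates are the barycentric coordinates. -/
def triBasis : AffineBasis (Fin 3) ℝ E2 :=
  ⟨vertex, affineIndependent_vertex,
    affineIndependent_vertex.affineSpan_eq_top_iff_card_eq_finrank_add_one.2 (by simp)⟩

@[simp] lemma coe_triBasis : ⇑triBasis = vertex := rfl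

lemma Dtri_eq_convexHull_range : Dtri = convexHull ℝ (range triBasis) := by
  rw [coe_triBasis, range_vertex, Dtri, V0]

lemma mem_Dtri_iff {x : E2} : x ∈ Dtri ↔ ∀ k, 0 ≤ triBasis.coord k x := by
  rw [Dtri_eq_convexHull_range, triBasis.convexHull_eq_nonneg_coord]
  rfl

lemma mem_Do_iff {x : E2} : x ∈ Do ↔ ∀ k, 0 < triBasis.coord k x := by
  rw [Do, Dtri_eq_convexHull_range, triBasis.interior_convexHull]
  rfl

lemma V0_finite : V0.Finite := range_vertex ▸ finite_range vertex

lemma edge_mem_E0 (k : Fin 3) : edge k ∈ E0 := range_edge ▸ mem_range_self k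

lemma vertex_mem_V0 (k : Fin 3) : vertex k ∈ V0 := range_vertex ▸ mem_range_self k

lemma V0_subset_Dtri : V0 ⊆ Dtri := subset_convexHull ℝ _

lemma Do_subset_Dtri : Do ⊆ Dtri := interior_subset

lemma convex_Dtri : Convex ℝ Dtri := convex_convexHull ℝ _

lemma isCompact_Dtri : IsCompact Dtri :=
  Finite.isCompact_convexHull (𝕜 := ℝ) V0_finite

lemma Do_nonempty : Do.Nonempty :=
  ⟨_, Do.eq_1 ▸ Dtri_eq_convexHull_range ▸ triBasis.centroid_mem_interior_convexHull⟩

lemma edge_subset_Dtri (k : Fin 3) : edge k ⊆ Dtri :=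
  convex_Dtri.segment_subset (V0_subset_Dtri (vertex_mem_V0 _)) (V0_subset_Dtri (vertex_mem_V0 _))

lemma isCompact_edge (k : Fin 3) : IsCompact (edge k) := by
  rw [edge, segment_eq_image_lineMap]
  exact isCompact_Icc.image AffineMap.lineMap_continuous

lemma univ_sum_fin_three_eq {M : Type*} [AddCommMonoid M] (f : Fin 3 → M) (k : Fin 3) :
    ∑ j, f j = f k + (f (k + 1) + f (k + 2)) := by
  fin_cases k <;> simp [Fin.sum_univ_three] <;> abel

/-- The affine parametrization of `edge k` by `[0, 1]`. -/
def edgeMap (k : Fin 3) : ℝ →ᵃ[ℝ] E2 := AffineMap.lineMap (vertex (k + 1)) (vertex (k + 2))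

lemma image_edgeMap (k : Fin 3) : edgeMap k '' Icc 0 1 = edge k :=
  (segment_eq_image_lineMap ℝ _ _).symm

lemma edgeMap_coord {k : Fin 3} {x : E2} (hx : triBasis.coord k x = 0) :
    edgeMap k (triBasis.coord (k + 2) x) = x := by
  have hsum : triBasis.coord (k + 1) x + triBasis.coord (k + 2) x = 1 := by
    simpa [univ_sum_fin_three_eq _ k, hx] using triBasis.sum_coord_apply_eq_one x
  have hcomb := triBasis.linear_combination_coord_eq_self x
  rw [univ_sum_fin_three_eq _ k, hx, zero_smul, zero_add] at hcomb
  rw [edgeMap, AffineMap.lineMap_apply_module, ← hsum, add_sub_cancel_right]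
  exact hcomb

lemma coord_edgeMap (k : Fin 3) (c : ℝ) : triBasis.coord k (edgeMap k c) = 0 := by
  have hvertex (i : Fin 3) (hi : k ≠ i) : triBasis.coord k (vertex i) = 0 :=
    triBasis.coord_apply_ne hi
  rw [edgeMap, AffineMap.apply_lineMap, hvertex _ (by simp), hvertex _ (by simp),
    AffineMap.lineMap_same_apply]

lemma mem_edge_iff {k : Fin 3} {x : E2} : x ∈ edge k ↔ x ∈ Dtri ∧ triBasis.coord k x = 0 := by
  refine ⟨fun hx => ⟨edge_subset_Dtri k hx, ?_⟩, fun ⟨hx, hk⟩ => ?_⟩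
  · obtain ⟨c, -, rfl⟩ := (image_edgeMap k).ge hx
    exact coord_edgeMap k c
  · have hle : triBasis.coord (k + 2) x ≤ 1 := by
      have h1 := mem_Dtri_iff.1 hx (k + 1)
      have hsum := triBasis.sum_coord_apply_eq_one x
      rw [univ_sum_fin_three_eq _ k, hk] at hsum
      linarith
    exact (image_edgeMap k).le ⟨_, ⟨mem_Dtri_iff.1 hx _, hle⟩, edgeMap_coord hk⟩

lemma mem_V0_of_mem_edge_of_mem_edge {k m : Fin 3} (hkm : k ≠ m) {x : E2} (hk : x ∈ edge k)
    (hm : x ∈ edge m) : x ∈ V0 := by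
  have hthird : ∀ k m : Fin 3, k ≠ m → ∃ j, ∀ i, i ≠ j → i = k ∨ i = m := by decide
  obtain ⟨j, hj⟩ := hthird k m hkm
  suffices x = triBasis j from this ▸ vertex_mem_V0 j
  have hzero (i : Fin 3) (hi : i ≠ j) : triBasis.coord i x = 0 := by
    rcases hj i hi with rfl | rfl
    exacts [(mem_edge_iff.1 hk).2, (mem_edge_iff.1 hm).2]
  refine triBasis.ext_elem fun i => ?_
  by_cases hi : i = j
  · subst hi
    rw [triBasis.coord_apply_eq, ← triBasis.sum_coord_apply_eq_one x]
    exact (Fintype.sum_eq_single i hzero).symm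
  · rw [hzero i hi, triBasis.coord_apply_ne hi]

lemma mem_Do_or_mem_V0_or_mem_eo_edge {x : E2} (hx : x ∈ Dtri) :
    x ∈ Do ∨ x ∈ V0 ∨ ∃ k, x ∈ eo (edge k) := by
  by_cases hV : x ∈ V0
  · exact Or.inr (Or.inl hV)
  by_cases hpos : ∀ k, 0 < triBasis.coord k x
  · exact Or.inl (mem_Do_iff.2 hpos)
  · obtain ⟨k, hk⟩ := not_forall.1 hpos
    have hk0 : triBasis.coord k x = 0 := le_antisymm (not_lt.1 hk) (mem_Dtri_iff.1 hx k)
    exact Or.inr (Or.inr ⟨k, mem_edge_iff.2 ⟨hx, hk0⟩, hV⟩)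

end Geometry

/-! ### Topology of a triangulated space -/

namespace Triangulation

variable (T : Triangulation S n)

/-- The vertices of the triangulation. -/
def vertices : Set S := ⋃ i, T.σ i '' V0

/-- The union of the open triangles of the triangulation. -/
def openTriangles : Set S := ⋃ i, T.σ i '' Do

/-- The open edge of the triangulation that is the image of the `k`-th edge of triangle `i`; glued
edges of different triangles give the same set. -/
def openEdge (i : Fin n) (k : Fin 3) : Set S := T.σ i '' eo (edge k)

/-- An open edge together with all open triangles: a neighbourhood of the edge that meets no other
edge. -/
def edgeStar (i : Fin n) (k : Fin 3) : Set S := T.openEdge i k ∪ T.openTriangles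

lemma finite_vertices : T.vertices.Finite :=
  finite_iUnion fun _ => V0_finite.image _

lemma disjoint_vertices_openTriangles : Disjoint T.vertices T.openTriangles :=
  disjoint_iUnion_right.2 T.disj_vert_int

lemma disjoint_vertices_openEdge (i : Fin n) (k : Fin 3) :
    Disjoint T.vertices (T.openEdge i k) :=
  T.disj_vert_edge i _ (edge_mem_E0 k)

lemma disjoint_openTriangles_openEdge (i : Fin n) (k : Fin 3) :
    Disjoint T.openTriangles (T.openEdge i k) :=
  disjoint_iUnion_left.2 fun j => T.disj_int_edge j i _ (edge_mem_E0 k)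

variable {T}

lemma apply_mem_vertices {x : E2} (hx : x ∈ V0) (i : Fin n) : T.σ i x ∈ T.vertices :=
  mem_iUnion.2 ⟨i, mem_image_of_mem _ hx⟩

lemma apply_mem_openTriangles {x : E2} (hx : x ∈ Do) (i : Fin n) : T.σ i x ∈ T.openTriangles :=
  mem_iUnion.2 ⟨i, mem_image_of_mem _ hx⟩

lemma apply_mem_openEdge {x : E2} {k : Fin 3} (hx : x ∈ eo (edge k)) (i : Fin n) :
    T.σ i x ∈ T.openEdge i k :=
  mem_image_of_mem _ hx

lemma exists_mem_image_Dtri (T : Triangulation S n) (p : S) : ∃ i, p ∈ T.σ i '' Dtri := by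
  have hp := T.cover.ge (mem_univ p)
  simp only [mem_union, mem_iUnion, ← range_edge, mem_range, exists_exists_eq_and,
    exists_prop] at hp
  rcases hp with (⟨i, hp⟩ | ⟨i, hp⟩) | ⟨i, k, hp⟩
  exacts [⟨i, image_mono V0_subset_Dtri hp⟩, ⟨i, image_mono Do_subset_Dtri hp⟩,
    ⟨i, image_mono (sdiff_subset.trans (edge_subset_Dtri k)) hp⟩]

lemma mem_vertices_or_openTriangles_or_openEdge (T : Triangulation S n) (p : S) :
    p ∈ T.vertices ∨ p ∈ T.openTriangles ∨ ∃ i k, p ∈ T.openEdge i k := by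
  obtain ⟨i, x, hx, rfl⟩ := T.exists_mem_image_Dtri p
  rcases mem_Do_or_mem_V0_or_mem_eo_edge hx with hDo | hV | ⟨k, hk⟩
  exacts [Or.inr (Or.inl (apply_mem_openTriangles hDo i)), Or.inl (apply_mem_vertices hV i),
    Or.inr (Or.inr ⟨i, k, apply_mem_openEdge hk i⟩)]

lemma mem_Do_of_apply_mem_openTriangles {i : Fin n} {x : E2} (hx : x ∈ Dtri)
    (h : T.σ i x ∈ T.openTriangles) : x ∈ Do := by
  rcases mem_Do_or_mem_V0_or_mem_eo_edge hx with hDo | hV | ⟨k, hk⟩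
  · exact hDo
  · exact (T.disjoint_vertices_openTriangles.notMem_of_mem_left (apply_mem_vertices hV i) h).elim
  · exact ((T.disjoint_openTriangles_openEdge i k).notMem_of_mem_left h
      (apply_mem_openEdge hk i)).elim

lemma exists_mem_eo_of_apply_mem_openEdge {i j : Fin n} {k : Fin 3} {x : E2} (hx : x ∈ Dtri)
    (h : T.σ j x ∈ T.openEdge i k) : ∃ m, x ∈ eo (edge m) ∧ T.openEdge j m = T.openEdge i k := by
  rcases mem_Do_or_mem_V0_or_mem_eo_edge hx with hDo | hV | ⟨m, hm⟩
  · exact ((T.disjoint_openTriangles_openEdge i k).notMem_of_mem_left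
      (apply_mem_openTriangles hDo j) h).elim
  · exact ((T.disjoint_vertices_openEdge i k).notMem_of_mem_left (apply_mem_vertices hV j) h).elim
  · refine ⟨m, hm, (T.edge_eq_or_disjoint j i _ (edge_mem_E0 m) _ (edge_mem_E0 k)).resolve_right
      fun hdisj => ?_⟩
    exact hdisj.notMem_of_mem_left (apply_mem_openEdge hm j) h

lemma mem_eo_of_apply_mem_openEdge {i j : Fin n} {k m : Fin 3} {x : E2} (hx : x ∈ edge m)
    (h : T.σ j x ∈ T.openEdge i k) : x ∈ eo (edge m) :=
  ⟨hx, fun hV =>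
    (T.disjoint_vertices_openEdge i k).notMem_of_mem_left (apply_mem_vertices hV j) h⟩

lemma disjoint_vertices_edgeStar (T : Triangulation S n) (i : Fin n) (k : Fin 3) :
    Disjoint T.vertices (T.edgeStar i k) :=
  (T.disjoint_vertices_openEdge i k).union_right T.disjoint_vertices_openTriangles

lemma openEdge_eq_inter (i : Fin n) (k : Fin 3) :
    T.openEdge i k = T.edgeStar i k ∩ T.σ i '' edge k := by
  apply Subset.antisymm
  · exact fun p hp => ⟨Or.inl hp, image_mono sdiff_subset hp⟩
  · rintro _ ⟨hp, x, hx, rfl⟩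
    exact apply_mem_openEdge ⟨hx, fun hV =>
      (T.disjoint_vertices_edgeStar i k).notMem_of_mem_left (apply_mem_vertices hV i) hp⟩ i

lemma Dtri_sdiff_preimage_edgeStar (T : Triangulation S n) (i j : Fin n) (k : Fin 3) :
    Dtri \ T.σ j ⁻¹' T.edgeStar i k =
      V0 ∪ ⋃ m ∈ {m | T.openEdge j m ≠ T.openEdge i k}, edge m := by
  ext x
  simp only [mem_union, mem_iUnion, exists_prop]
  constructor
  · rintro ⟨hx, hxs⟩
    rcases mem_Do_or_mem_V0_or_mem_eo_edge hx with hDo | hV | ⟨m, hm⟩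
    · exact (hxs (Or.inr (apply_mem_openTriangles hDo j))).elim
    · exact Or.inl hV
    · exact Or.inr ⟨m, fun heq => hxs (Or.inl (heq ▸ apply_mem_openEdge hm j)), hm.1⟩
  · have hV {x : E2} (hV : x ∈ V0) : x ∈ Dtri \ T.σ j ⁻¹' T.edgeStar i k :=
      ⟨V0_subset_Dtri hV,
        (T.disjoint_vertices_edgeStar i k).notMem_of_mem_left (apply_mem_vertices hV j)⟩
    rintro (hx | ⟨m, hm, hx⟩)
    · exact hV hx
    by_cases hxV : x ∈ V0
    · exact hV hxV
    refine ⟨edge_subset_Dtri m hx, ?_⟩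
    rintro (h | h)
    · obtain ⟨m', hm', heq⟩ := exists_mem_eo_of_apply_mem_openEdge (edge_subset_Dtri m hx) h
      obtain rfl : m' = m := by
        by_contra hne
        exact hxV (mem_V0_of_mem_edge_of_mem_edge hne hm'.1 hx)
      exact hm heq
    · exact (T.disjoint_openTriangles_openEdge j m).notMem_of_mem_left h
        (apply_mem_openEdge ⟨hx, hxV⟩ j)

variable [T2Space S]

lemma isOpen_of_isClosed_sdiff_preimage {U : Set S}
    (hU : ∀ i, IsClosed (Dtri \ T.σ i ⁻¹' U)) : IsOpen U := by
  have hcompl : Uᶜ = ⋃ i, T.σ i '' (Dtri \ T.σ i ⁻¹' U) := by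
    ext p
    constructor
    · intro hp
      obtain ⟨i, x, hx, rfl⟩ := T.exists_mem_image_Dtri p
      exact mem_iUnion.2 ⟨i, x, ⟨hx, hp⟩, rfl⟩
    · simp only [mem_iUnion]
      rintro ⟨i, x, ⟨-, hx⟩, rfl⟩
      exact hx
  rw [← isClosed_compl_iff, hcompl]
  exact isClosed_iUnion_of_finite fun i =>
    ((isCompact_Dtri.of_isClosed_subset (hU i) sdiff_subset).image_of_continuousOn
      ((T.continuousOn i).mono sdiff_subset)).isClosed

lemma isOpen_image_Do (T : Triangulation S n) (i : Fin n) : IsOpen (T.σ i '' Do) := by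
  refine T.isOpen_of_isClosed_sdiff_preimage fun j => ?_
  obtain rfl | hji := eq_or_ne j i
  · have hpre : Dtri \ T.σ j ⁻¹' (T.σ j '' Do) = Dtri \ Do := by
      refine Subset.antisymm (sdiff_subset_sdiff_right (subset_preimage_image _ _)) ?_
      rintro x ⟨hx, hxo⟩
      exact ⟨hx, fun h => hxo (mem_Do_of_apply_mem_openTriangles hx (mem_iUnion.2 ⟨j, h⟩))⟩
    rw [hpre]
    exact isCompact_Dtri.isClosed.sdiff isOpen_interior
  · have hpre : Dtri \ T.σ j ⁻¹' (T.σ i '' Do) = Dtri := by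
      refine sdiff_eq_left.2 (disjoint_left.2 fun x hx h => ?_)
      have hxo := mem_Do_of_apply_mem_openTriangles hx (mem_iUnion.2 ⟨i, h⟩)
      exact (T.disj_int j i hji).notMem_of_mem_left (mem_image_of_mem _ hxo) h
    rw [hpre]
    exact isCompact_Dtri.isClosed

lemma isOpen_edgeStar (T : Triangulation S n) (i : Fin n) (k : Fin 3) :
    IsOpen (T.edgeStar i k) := by
  refine T.isOpen_of_isClosed_sdiff_preimage fun j => ?_
  rw [T.Dtri_sdiff_preimage_edgeStar]
  exact V0_finite.isClosed.union
    ((toFinite _).isClosed_biUnion fun m _ => (isCompact_edge m).isClosed)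

lemma continuous_of_continuousOn_comp {Z : Type*} [TopologicalSpace Z] {G : S → Z}
    (hG : ∀ i, ContinuousOn (G ∘ T.σ i) Dtri) : Continuous G :=
  continuous_def.2 fun _ hU => T.isOpen_of_isClosed_sdiff_preimage fun i =>
    (hG i).preimage_isClosed_of_isClosed isCompact_Dtri.isClosed hU.isClosed_compl

lemma exists_subset_image_Do (T : Triangulation S n) {A : Set S} (hA : IsPreconnected A)
    (hne : A.Nonempty) (hAT : A ⊆ T.openTriangles) : ∃ j, A ⊆ T.σ j '' Do := by
  obtain ⟨p, hp⟩ := hne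
  obtain ⟨j, hj⟩ := mem_iUnion.1 (hAT hp)
  refine ⟨j, hA.subset_left_of_subset_union (v := ⋃ m ∈ {m | j ≠ m}, T.σ m '' Do)
    (T.isOpen_image_Do j) (isOpen_biUnion fun m _ => T.isOpen_image_Do m)
    (disjoint_iUnion₂_right.2 fun m hm => T.disj_int j m hm) (fun x hx => ?_) ⟨p, hp, hj⟩⟩
  obtain ⟨m, hm⟩ := mem_iUnion.1 (hAT hx)
  obtain rfl | hjm := eq_or_ne j m
  exacts [Or.inl hm, Or.inr (mem_iUnion₂.2 ⟨m, hjm, hm⟩)]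

end Triangulation

/-! ### Linear metrics on the triangles -/

namespace Triangulation

variable {F Y Z : Type*} [NormedAddCommGroup F] [NormedSpace ℝ F] [PseudoEMetricSpace Y]
  [PseudoEMetricSpace Z]

/-- Curves in triangle `i` have the same length through `q ∘ T.σ i` as in the Euclidean metric that
the linear map `f i` induces on `Dtri`. -/
def PreservesLength (T : Triangulation S n) (f : Fin n → E2 →ₗ[ℝ] F) (q : S → Y) : Prop :=
  ∀ i ⦃g : ℝ → E2⦄, ContinuousOn g (Icc 0 1) → MapsTo g (Icc 0 1) Dtri →
    eVariationOn (f i ∘ g) (Icc 0 1) = eVariationOn (q ∘ T.σ i ∘ g) (Icc 0 1)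

/-- On each triangle, `G` is `1`-Lipschitz for the Euclidean metric that the linear map `f i`
induces on `Dtri`. -/
def TriangleNonexpanding (T : Triangulation S n) (f : Fin n → E2 →ₗ[ℝ] F) (G : S → Z) : Prop :=
  ∀ i, ∀ x ∈ Dtri, ∀ y ∈ Dtri, edist (G (T.σ i x)) (G (T.σ i y)) ≤ edist (f i x) (f i y)

variable {T : Triangulation S n} {f : Fin n → E2 →ₗ[ℝ] F}

lemma TriangleNonexpanding.continuous [T2Space S] {G : S → Z} (hG : T.TriangleNonexpanding f G) :
    Continuous G := by
  refine T.continuous_of_continuousOn_comp fun i =>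
    LipschitzOnWith.continuousOn (K := ‖(f i).toContinuousLinearMap‖₊) fun x hx y hy => ?_
  exact (hG i x hx y hy).trans ((f i).toContinuousLinearMap.lipschitz x y)

namespace PreservesLength

variable {q : S → Y}

lemma eVariationOn_Icc (h : T.PreservesLength f q) (i : Fin n) {g : ℝ → E2} {s t : ℝ}
    (hst : s ≤ t) (hg : ContinuousOn g (Icc s t)) (hgD : MapsTo g (Icc s t) Dtri) :
    eVariationOn (f i ∘ g) (Icc s t) = eVariationOn (q ∘ T.σ i ∘ g) (Icc s t) := by
  have hmaps : MapsTo (AffineMap.lineMap s t) (Icc (0 : ℝ) 1) (Icc s t) := by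
    rw [← segment_eq_Icc hst, segment_eq_image_lineMap]
    exact mapsTo_image _ _
  rw [← eVariationOn_comp_lineMap _ hst, ← eVariationOn_comp_lineMap _ hst]
  exact h i (hg.comp AffineMap.lineMap_continuous.continuousOn hmaps) (hgD.comp hmaps)

lemma eVariationOn_lineMap (h : T.PreservesLength f q) (i : Fin n) {x y : E2} {s t : ℝ}
    (hst : s ≤ t) (hD : MapsTo (AffineMap.lineMap x y) (Icc s t) Dtri) :
    eVariationOn (q ∘ T.σ i ∘ AffineMap.lineMap x y) (Icc s t) =
      edist (f i (AffineMap.lineMap x y s)) (f i (AffineMap.lineMap x y t)) := by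
  have happly (v : ℝ) : f i (AffineMap.lineMap x y v) = AffineMap.lineMap (f i x) (f i y) v :=
    AffineMap.apply_lineMap (f i).toAffineMap x y v
  rw [← h.eVariationOn_Icc i hst AffineMap.lineMap_continuous.continuousOn hD, happly, happly,
    ← eVariationOn_lineMap_eq_edist _ _ hst]
  exact congrArg (eVariationOn · (Icc s t)) (funext happly)

lemma eVariationOn_lineMap_Icc_zero_one (h : T.PreservesLength f q) (i : Fin n) {x y : E2}
    (hx : x ∈ Dtri) (hy : y ∈ Dtri) :
    eVariationOn (q ∘ T.σ i ∘ AffineMap.lineMap x y) (Icc (0 : ℝ) 1) = edist (f i x) (f i y) := by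
  have hD : MapsTo (AffineMap.lineMap x y) (Icc (0 : ℝ) 1) Dtri :=
    mapsTo_iff_image_subset.2
      ((segment_eq_image_lineMap ℝ x y).symm.trans_subset (convex_Dtri.segment_subset hx hy))
  simpa using h.eVariationOn_lineMap i zero_le_one hD

lemma triangleNonexpanding (h : T.PreservesLength f q) : T.TriangleNonexpanding f q := by
  intro i x hx y hy
  rw [← h.eVariationOn_lineMap_Icc_zero_one i hx hy]
  simpa using edist_le_eVariationOn_Icc (q ∘ T.σ i ∘ AffineMap.lineMap x y) zero_le_one

lemma edist_eq_of_openEdge_eq (h : T.PreservesLength f q) {i j : Fin n} {k m : Fin 3}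
    (heq : T.openEdge i k = T.openEdge j m) {x y x' y' : E2} (hx : x ∈ eo (edge k))
    (hy : y ∈ eo (edge k)) (hx' : x' ∈ eo (edge m)) (hy' : y' ∈ eo (edge m))
    (hxx' : T.σ j x' = T.σ i x) (hyy' : T.σ j y' = T.σ i y) :
    edist (f i x) (f i y) = edist (f j x') (f j y') := by
  obtain ⟨A, hA, hσA⟩ := T.glue i j _ (edge_mem_E0 k) _ (edge_mem_E0 m) heq
  have hA_apply {z z' : E2} (hz : z ∈ eo (edge k)) (hz' : z' ∈ eo (edge m))
      (hzz' : T.σ j z' = T.σ i z) : A z = z' := by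
    have hAz : A z ∈ eo (edge m) :=
      mem_eo_of_apply_mem_openEdge (hA ▸ mem_image_of_mem A hz.1)
        (hσA z hz.1 ▸ apply_mem_openEdge hz i)
    exact T.inj_edge j _ (edge_mem_E0 m) hAz hz' ((hσA z hz.1).trans hzz'.symm)
  rw [← h.eVariationOn_lineMap_Icc_zero_one i (edge_subset_Dtri k hx.1) (edge_subset_Dtri k hy.1),
    ← h.eVariationOn_lineMap_Icc_zero_one j (edge_subset_Dtri m hx'.1) (edge_subset_Dtri m hy'.1)]
  refine eVariationOn.congr fun v hv => ?_
  have hv_mem : AffineMap.lineMap x y v ∈ edge k :=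
    (convex_segment _ _).segment_subset hx.1 hy.1
      (segment_eq_image_lineMap ℝ x y ▸ mem_image_of_mem _ hv)
  simp only [Function.comp, ← hA_apply hx hx' hxx', ← hA_apply hy hy' hyy',
    ← AffineMap.apply_lineMap, hσA _ hv_mem]

lemma linearMap_injective {M : Type*} [EMetricSpace M] {q : S → M} (h : T.PreservesLength f q)
    (hq : Function.Injective q) (i : Fin n) : Function.Injective (f i) := by
  have hinj : InjOn (f i) Do := fun x hx y hy hxy => by
    have hle := h.triangleNonexpanding i x (Do_subset_Dtri hx) y (Do_subset_Dtri hy)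
    rw [hxy, edist_self, nonpos_iff_eq_zero, edist_eq_zero] at hle
    exact T.inj_int i hx hy (hq hle)
  obtain ⟨x, hx⟩ := Do_nonempty
  have hDo : Do ∈ nhds x := isOpen_interior.mem_nhds hx
  rw [← LinearMap.ker_eq_bot, LinearMap.ker_eq_bot']
  intro z hz
  have hnear : ∀ᶠ ε : ℝ in nhds 0, x + ε • z ∈ Do :=
    (by fun_prop : Continuous fun ε : ℝ => x + ε • z).continuousAt.eventually_mem
      (by simpa using hDo)
  obtain ⟨ε, hε, hε0⟩ := ((hnear.filter_mono nhdsWithin_le_nhds).and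
    (self_mem_nhdsWithin (s := {(0 : ℝ)}ᶜ))).exists
  have hεz : ε • z = 0 := by simpa using hinj hε hx (by simp [hz])
  exact (smul_eq_zero.1 hεz).resolve_left hε0

end PreservesLength

end Triangulation

/-! ### Excursions into the open triangles -/

namespace Triangulation

variable {F Y Z : Type*} [NormedAddCommGroup F] [NormedSpace ℝ F] [PseudoEMetricSpace Y]
  [PseudoEMetricSpace Z] [T2Space S] {T : Triangulation S n} {f : Fin n → E2 →ₗ[ℝ] F} {q : S → Y}

lemma continuousOn_invFunOn_Do (T : Triangulation S n) (i : Fin n) :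
    ContinuousOn (Function.invFunOn (T.σ i) Do) (T.σ i '' Do) :=
  continuousOn_invFunOn_image isCompact_Dtri (T.continuousOn i) Do_subset_Dtri (T.inj_int i)
    fun _ hx h => mem_Do_of_apply_mem_openTriangles hx (mem_iUnion.2 ⟨i, h⟩)

lemma exists_tendsto_invFunOn_Do {ι : Type*} {l : Filter ι} [l.NeBot] {j : Fin n} {γ : ι → S}
    {z : S} (hγ : ∀ᶠ t in l, γ t ∈ T.σ j '' Do) (hz : Filter.Tendsto γ l (nhds z)) :
    ∃ x ∈ Dtri, T.σ j x = z ∧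
      ∃ l' ≤ l, l'.NeBot ∧ Filter.Tendsto (Function.invFunOn (T.σ j) Do ∘ γ) l' (nhds x) :=
  exists_tendsto_of_tendsto_comp_of_isCompact isCompact_Dtri (T.continuousOn j)
    (hγ.mono fun _ ht => Do_subset_Dtri (Function.invFunOn_mem ht))
    (hz.congr' (hγ.mono fun _ ht => (Function.invFunOn_eq ht).symm))

namespace PreservesLength

lemma curveNonexpandingOn_image_Do (h : T.PreservesLength f q) (i : Fin n) :
    CurveNonexpandingOn q (f i ∘ Function.invFunOn (T.σ i) Do) (T.σ i '' Do) := by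
  intro γ a b hab hγ hγD
  let g : ℝ → E2 := Function.invFunOn (T.σ i) Do ∘ γ
  have hσg : EqOn (q ∘ T.σ i ∘ g) (q ∘ γ) (Icc a b) := fun t ht =>
    congrArg q (Function.invFunOn_eq (hγD ht))
  rw [← eVariationOn.congr hσg, ← h.eVariationOn_Icc i hab
    ((T.continuousOn_invFunOn_Do i).comp hγ hγD)
    fun t ht => Do_subset_Dtri (Function.invFunOn_mem (hγD ht))]
  exact edist_le_eVariationOn_Icc (f i ∘ g) hab

lemma exists_edist_le_of_mapsTo_Ioo (h : T.PreservesLength f q) {γ : ℝ → S} {α β : ℝ}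
    (hαβ : α < β) (hγ : ContinuousOn γ (Icc α β)) (hγT : MapsTo γ (Ioo α β) T.openTriangles) :
    ∃ j, ∃ x ∈ Dtri, ∃ y ∈ Dtri, T.σ j x = γ α ∧ T.σ j y = γ β ∧
      edist (f j x) (f j y) ≤ eVariationOn (q ∘ γ) (Icc α β) := by
  obtain ⟨j, hj⟩ := T.exists_subset_image_Do
    (isPreconnected_Ioo.image γ (hγ.mono Ioo_subset_Icc_self))
    ((nonempty_Ioo.2 hαβ).image γ) hγT.image_subset
  have hγj : MapsTo γ (Ioo α β) (T.σ j '' Do) := mapsTo_iff_image_subset.2 hj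
  obtain ⟨m, hαm, hmβ⟩ := exists_between hαβ
  have := left_nhdsWithin_Ioo_neBot hαm
  have := right_nhdsWithin_Ioo_neBot hmβ
  obtain ⟨x, hx, hxα, lα, hlα, _, hgx⟩ := exists_tendsto_invFunOn_Do (l := nhdsWithin α (Ioo α m))
    (Filter.eventually_of_mem self_mem_nhdsWithin fun t ht => hγj ⟨ht.1, ht.2.trans hmβ⟩)
    ((hγ α (left_mem_Icc.2 hαβ.le)).mono_left
      (nhdsWithin_mono α fun t ht => ⟨ht.1.le, (ht.2.trans hmβ).le⟩))
  obtain ⟨y, hy, hyβ, lβ, hlβ, _, hgy⟩ := exists_tendsto_invFunOn_Do (l := nhdsWithin β (Ioo m β))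
    (Filter.eventually_of_mem self_mem_nhdsWithin fun t ht => hγj ⟨hαm.trans ht.1, ht.2⟩)
    ((hγ β (right_mem_Icc.2 hαβ.le)).mono_left
      (nhdsWithin_mono β fun t ht => ⟨(hαm.trans ht.1).le, ht.2.le⟩))
  have hf : Continuous (f j) := (f j).continuous_of_finiteDimensional
  refine ⟨j, x, hx, y, hy, hxα, hyβ, le_of_tendsto
    ((((hf.tendsto x).comp hgx).comp Filter.tendsto_fst).edist
      (((hf.tendsto y).comp hgy).comp Filter.tendsto_snd))
    ((Filter.Eventually.prod_mk (hlα self_mem_nhdsWithin) (hlβ self_mem_nhdsWithin)).mono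
      fun p hp => ?_)⟩
  have hsub : Icc p.1 p.2 ⊆ Ioo α β := fun u hu =>
    ⟨hp.1.1.trans_le hu.1, hu.2.trans_lt hp.2.2⟩
  exact (h.curveNonexpandingOn_image_Do j (hp.1.2.trans hp.2.1).le
    (hγ.mono (hsub.trans Ioo_subset_Icc_self)) (hγj.mono_left hsub)).trans
    (eVariationOn.mono _ (hsub.trans Ioo_subset_Icc_self))

lemma curveNonexpandingOn_openTriangles (h : T.PreservesLength f q) {G : S → Z}
    (hG : T.TriangleNonexpanding f G) : CurveNonexpandingOn q G T.openTriangles := by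
  intro γ a b hab hγ hγT
  obtain rfl | hab := hab.eq_or_lt
  · simp
  obtain ⟨j, x, hx, y, hy, hxa, hyb, hle⟩ :=
    h.exists_edist_le_of_mapsTo_Ioo hab hγ (hγT.mono_left Ioo_subset_Icc_self)
  rw [← hxa, ← hyb]
  exact (hG j x hx y hy).trans hle

end PreservesLength

end Triangulation

/-! ### Curves near edges and vertices -/

namespace Triangulation

variable {F Y Z : Type*} [NormedAddCommGroup F] [NormedSpace ℝ F]
  {T : Triangulation S n} {f : Fin n → E2 →ₗ[ℝ] F} {i : Fin n} {k : Fin 3}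

/-- The parameter under `edgeMap k` of a point of `T.openEdge i k`; a junk value off that edge. -/
def edgeCoord (T : Triangulation S n) (i : Fin n) (k : Fin 3) (p : S) : ℝ :=
  triBasis.coord (k + 2) (Function.invFunOn (T.σ i) (eo (edge k)) p)

lemma edgeMap_edgeCoord_of_mem {p : S} (hp : p ∈ T.openEdge i k) :
    edgeMap k (T.edgeCoord i k p) = Function.invFunOn (T.σ i) (eo (edge k)) p :=
  edgeMap_coord (mem_edge_iff.1 (Function.invFunOn_mem hp).1).2

lemma edgeMap_edgeCoord_mem_eo {p : S} (hp : p ∈ T.openEdge i k) :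
    edgeMap k (T.edgeCoord i k p) ∈ eo (edge k) :=
  (edgeMap_edgeCoord_of_mem hp).symm ▸ Function.invFunOn_mem hp

lemma apply_edgeMap_edgeCoord {p : S} (hp : p ∈ T.openEdge i k) :
    T.σ i (edgeMap k (T.edgeCoord i k p)) = p :=
  (edgeMap_edgeCoord_of_mem hp).symm ▸ Function.invFunOn_eq hp

lemma continuousOn_edgeCoord [T2Space S] (T : Triangulation S n) (i : Fin n) (k : Fin 3) :
    ContinuousOn (T.edgeCoord i k) (T.openEdge i k) :=
  (continuous_barycentric_coord triBasis (k + 2)).comp_continuousOn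
    (continuousOn_invFunOn_image (isCompact_edge k) ((T.continuousOn i).mono (edge_subset_Dtri k))
      sdiff_subset (T.inj_edge i _ (edge_mem_E0 k))
      fun _ hx h => mem_eo_of_apply_mem_openEdge hx h)

lemma PreservesLength.eVariationOn_edgeMap_uIcc [PseudoEMetricSpace Y] {q : S → Y}
    (h : T.PreservesLength f q) (i : Fin n) {k : Fin 3} {v w : ℝ} (hv : edgeMap k v ∈ edge k)
    (hw : edgeMap k w ∈ edge k) :
    eVariationOn (q ∘ T.σ i ∘ edgeMap k) (uIcc v w) =
      edist (f i (edgeMap k v)) (f i (edgeMap k w)) := by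
  wlog hvw : v ≤ w generalizing v w
  · rw [uIcc_comm, edist_comm, this hw hv (le_of_not_ge hvw)]
  rw [uIcc_of_le hvw]
  refine h.eVariationOn_lineMap i hvw (mapsTo_iff_image_subset.2 ?_)
  rw [← segment_eq_Icc hvw, image_segment]
  exact convex_Dtri.segment_subset (edge_subset_Dtri k hv) (edge_subset_Dtri k hw)

lemma exists_pos_le_dist_of_ne_edge (T : Triangulation S n)
    (hf : ∀ i, Function.Injective (f i)) {U : Set S} (hU : IsOpen U) (hTU : T.vertices ⊆ U) :
    ∃ c > 0, ∀ j, ∀ k m, k ≠ m → ∀ x ∈ edge k, ∀ y ∈ edge m, T.σ j x ∉ U → T.σ j y ∉ U →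
      c ≤ dist (f j x) (f j y) := by
  suffices ∀ᶠ c : ℝ in nhdsWithin 0 (Ioi 0), ∀ j, ∀ k m, k ≠ m → ∀ x ∈ edge k, ∀ y ∈ edge m,
      T.σ j x ∉ U → T.σ j y ∉ U → c ≤ dist (f j x) (f j y) by
    obtain ⟨c, hc, hc0⟩ := (this.and self_mem_nhdsWithin).exists
    exact ⟨c, hc0, hc⟩
  simp only [Filter.eventually_all]
  intro j k m hkm
  have hfj : Continuous (f j) := (f j).continuous_of_finiteDimensional
  have hcompact (k : Fin 3) : IsCompact (edge k ∩ T.σ j ⁻¹' Uᶜ) :=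
    (isCompact_edge k).of_isClosed_subset
      (((T.continuousOn j).mono (edge_subset_Dtri k)).preimage_isClosed_of_isClosed
        (isCompact_edge k).isClosed hU.isClosed_compl) inter_subset_left
  have hpos : ∀ z ∈ (edge k ∩ T.σ j ⁻¹' Uᶜ) ×ˢ (edge m ∩ T.σ j ⁻¹' Uᶜ),
      0 < dist (f j z.1) (f j z.2) := by
    rintro ⟨x, y⟩ ⟨⟨hx, hxU⟩, hy, -⟩
    refine dist_pos.2 fun hxy => ?_
    obtain rfl : x = y := hf j hxy
    exact hxU (hTU (apply_mem_vertices (mem_V0_of_mem_edge_of_mem_edge hkm hx hy) j))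
  obtain ⟨c, hc0, hc⟩ := ((hcompact k).prod (hcompact m)).exists_forall_le'
    ((hfj.comp continuous_fst).dist (hfj.comp continuous_snd)).continuousOn hpos
  filter_upwards [Ioo_mem_nhdsGT hc0] with c' hc' x hx y hy hxU hyU
  exact hc'.2.le.trans (hc (x, y) ⟨⟨hx, hxU⟩, hy, hyU⟩)

/-- A part `N` of the star of an edge in which no triangle provides a path between two points of
the edge that is shorter than the edge itself. -/
structure IsShortcutFree (T : Triangulation S n) (f : Fin n → E2 →ₗ[ℝ] F) (i : Fin n) (k : Fin 3)
    (N : Set S) : Prop where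
  subset_edgeStar : N ⊆ T.edgeStar i k
  edist_le : ∀ j, ∀ x' ∈ Dtri, ∀ y' ∈ Dtri, ∀ x ∈ eo (edge k), ∀ y ∈ eo (edge k),
    T.σ j x' = T.σ i x → T.σ j y' = T.σ i y → T.σ i x ∈ N → T.σ i y ∈ N →
    edist (f i x) (f i y) ≤ edist (f j x') (f j y')

lemma PreservesLength.exists_isShortcutFree [T2Space S] [EMetricSpace Y] {q : S → Y}
    (h : T.PreservesLength f q) (hq : Function.Injective q) {x₀ : E2} (hx₀ : x₀ ∈ eo (edge k)) :
    ∃ N, IsOpen N ∧ T.σ i x₀ ∈ N ∧ T.IsShortcutFree f i k N := by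
  have hx₀V : T.σ i x₀ ∉ T.vertices :=
    (T.disjoint_vertices_openEdge i k).notMem_of_mem_right (apply_mem_openEdge hx₀ i)
  obtain ⟨U, V, hU, hV, hTU, hxV, hUV⟩ := SeparatedNhds.of_isCompact_isCompact
    T.finite_vertices.isCompact isCompact_singleton (disjoint_singleton_right.2 hx₀V)
  obtain ⟨c, hc0, hc⟩ := T.exists_pos_le_dist_of_ne_edge (h.linearMap_injective hq) hU hTU
  let W : Set E2 := f i ⁻¹' Metric.ball (f i x₀) (c / 2)
  have hW : IsOpen W := Metric.isOpen_ball.preimage (f i).continuous_of_finiteDimensional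
  have hclosed : IsClosed (T.σ i '' (edge k \ W)) :=
    (((isCompact_edge k).diff hW).image_of_continuousOn
      ((T.continuousOn i).mono (sdiff_subset.trans (edge_subset_Dtri k)))).isClosed
  refine ⟨(T.edgeStar i k ∩ V) \ (T.σ i '' (edge k \ W)),
    ((T.isOpen_edgeStar i k).inter hV).sdiff hclosed,
    ⟨⟨Or.inl (apply_mem_openEdge hx₀ i), hxV rfl⟩, ?_⟩, fun p hp => hp.1.1, ?_⟩
  · rintro ⟨x, ⟨hx, hxW⟩, hxx₀⟩
    have hx' := mem_eo_of_apply_mem_openEdge hx (hxx₀ ▸ apply_mem_openEdge hx₀ i)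
    obtain rfl := T.inj_edge i _ (edge_mem_E0 k) hx' hx₀ hxx₀
    exact hxW (Metric.mem_ball_self (half_pos hc0))
  · rintro j x' hx' y' hy' x hx y hy hxx' hyy' ⟨⟨-, hxV⟩, hxW⟩ ⟨⟨-, hyV⟩, hyW⟩
    obtain ⟨m, hm, hmk⟩ :=
      exists_mem_eo_of_apply_mem_openEdge hx' (hxx' ▸ apply_mem_openEdge hx i)
    obtain ⟨m', hm', -⟩ :=
      exists_mem_eo_of_apply_mem_openEdge hy' (hyy' ▸ apply_mem_openEdge hy i)
    obtain rfl | hne := eq_or_ne m m'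
    · exact (h.edist_eq_of_openEdge_eq hmk.symm hx hy hm hm' hxx' hyy').le
    have hfar : c ≤ dist (f j x') (f j y') := hc j m m' hne x' hm.1 y' hm'.1
      (hxx' ▸ hUV.notMem_of_mem_right hxV) (hyy' ▸ hUV.notMem_of_mem_right hyV)
    have hball {z : E2} (hz : z ∈ eo (edge k)) (hzW : T.σ i z ∉ T.σ i '' (edge k \ W)) :
        dist (f i z) (f i x₀) < c / 2 :=
      by_contra fun hzc => hzW ⟨z, ⟨hz.1, hzc⟩, rfl⟩
    rw [edist_dist, edist_dist]
    refine ENNReal.ofReal_le_ofReal (le_trans ?_ hfar)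
    linarith [dist_triangle_right (f i x) (f i y) (f i x₀), hball hx hxW, hball hy hyW]

variable [PseudoEMetricSpace Y] [PseudoEMetricSpace Z] [T2Space S] {q : S → Y} {N : Set S}

lemma isClosed_image_edge (T : Triangulation S n) (i : Fin n) (k : Fin 3) :
    IsClosed (T.σ i '' edge k) :=
  ((isCompact_edge k).image_of_continuousOn
    ((T.continuousOn i).mono (edge_subset_Dtri k))).isClosed

lemma isCompact_Icc_inter_preimage_openEdge (hN : N ⊆ T.edgeStar i k) {γ : ℝ → S} {a b : ℝ}
    (hγ : ContinuousOn γ (Icc a b)) (hγN : MapsTo γ (Icc a b) N) :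
    IsCompact (Icc a b ∩ γ ⁻¹' T.openEdge i k) := by
  have heq : Icc a b ∩ γ ⁻¹' T.openEdge i k = Icc a b ∩ γ ⁻¹' (T.σ i '' edge k) := by
    ext t
    refine and_congr_right fun ht => ?_
    rw [mem_preimage, openEdge_eq_inter]
    exact and_iff_right (hN (hγN ht))
  rw [heq]
  exact isCompact_Icc.of_isClosed_subset (hγ.preimage_isClosed_of_isClosed isClosed_Icc
    (T.isClosed_image_edge i k)) inter_subset_left

namespace PreservesLength

lemma edist_edgeMap_edgeCoord_le (h : T.PreservesLength f q) (hN : T.IsShortcutFree f i k N)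
    {γ : ℝ → S} {a b : ℝ} (hab : a ≤ b) (hγ : ContinuousOn γ (Icc a b))
    (hγN : MapsTo γ (Icc a b) N) (ha : γ a ∈ T.openEdge i k) (hb : γ b ∈ T.openEdge i k) :
    edist (f i (edgeMap k (T.edgeCoord i k (γ a)))) (f i (edgeMap k (T.edgeCoord i k (γ b)))) ≤
      eVariationOn (q ∘ γ) (Icc a b) := by
  let K : Set ℝ := Icc a b ∩ γ ⁻¹' T.openEdge i k
  have hvar {α β : ℝ} (hα : γ α ∈ T.openEdge i k) (hβ : γ β ∈ T.openEdge i k) :=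
    h.eVariationOn_edgeMap_uIcc i (edgeMap_edgeCoord_mem_eo hα).1 (edgeMap_edgeCoord_mem_eo hβ).1
  rw [← hvar ha hb]
  refine eVariationOn_uIcc_le_of_gap_le (K := K) (h := T.edgeCoord i k ∘ γ)
    (isCompact_Icc_inter_preimage_openEdge hN.subset_edgeStar hγ hγN)
    ⟨⟨left_mem_Icc.2 hab, ha⟩, fun t ht => ht.1.1⟩ ⟨⟨right_mem_Icc.2 hab, hb⟩, fun t ht => ht.1.2⟩
    ((T.continuousOn_edgeCoord i k).comp (hγ.mono inter_subset_left) fun t ht => ht.2)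
    (fun t ht => congrArg q (apply_edgeMap_edgeCoord ht.2).symm) ?_
  rintro α ⟨hα, hαe⟩ β ⟨hβ, hβe⟩ hαβ hdisj
  obtain rfl | hαβ := hαβ.eq_or_lt
  · simp
  have hsub : Icc α β ⊆ Icc a b := Icc_subset_Icc hα.1 hβ.2
  obtain ⟨j, x, hx, y, hy, hxα, hyβ, hle⟩ := h.exists_edist_le_of_mapsTo_Ioo hαβ (hγ.mono hsub)
    fun t ht => (hN.subset_edgeStar (hγN (hsub (Ioo_subset_Icc_self ht)))).resolve_left
      fun hte => hdisj.notMem_of_mem_right ht ⟨hsub (Ioo_subset_Icc_self ht), hte⟩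
  rw [Function.comp_apply, Function.comp_apply, hvar hαe hβe]
  refine (hN.edist_le j x hx y hy _ (edgeMap_edgeCoord_mem_eo hαe) _
    (edgeMap_edgeCoord_mem_eo hβe) ?_ ?_ ?_ ?_).trans hle
  all_goals rw [apply_edgeMap_edgeCoord]
  all_goals first | assumption | exact hγN ‹_›

lemma curveNonexpandingOn_of_isShortcutFree (h : T.PreservesLength f q) {G : S → Z}
    (hG : T.TriangleNonexpanding f G) (hN : T.IsShortcutFree f i k N) :
    CurveNonexpandingOn q G N := by
  have hmem {p : S} (hpN : p ∈ N) (hpC : p ∈ T.σ i '' edge k) : p ∈ T.openEdge i k :=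
    (openEdge_eq_inter i k).ge ⟨hN.subset_edgeStar hpN, hpC⟩
  refine .of_sdiff_of_isClosed hG.continuous (T.isClosed_image_edge i k)
    ((h.curveNonexpandingOn_openTriangles hG).mono fun p hp => ?_) fun γ a b hab hγ hγN ha hb => ?_
  · exact (hN.subset_edgeStar hp.1).resolve_left fun hpe => hp.2 (image_mono sdiff_subset hpe)
  · have ha' := hmem (hγN (left_mem_Icc.2 hab)) ha
    have hb' := hmem (hγN (right_mem_Icc.2 hab)) hb
    have hedge := hG i _ (edge_subset_Dtri k (edgeMap_edgeCoord_mem_eo ha').1) _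
      (edge_subset_Dtri k (edgeMap_edgeCoord_mem_eo hb').1)
    rw [apply_edgeMap_edgeCoord ha', apply_edgeMap_edgeCoord hb'] at hedge
    exact hedge.trans (h.edist_edgeMap_edgeCoord_le hN hab hγ hγN ha' hb')

end PreservesLength

end Triangulation

namespace Triangulation.PreservesLength

variable {F Y Z : Type*} [NormedAddCommGroup F] [NormedSpace ℝ F] [EMetricSpace Y]
  [PseudoEMetricSpace Z] [T2Space S] {T : Triangulation S n} {f : Fin n → E2 →ₗ[ℝ] F} {q : S → Y}
  {G : S → Z}

lemma curveNonexpandingOn_compl_vertices (h : T.PreservesLength f q) (hq : Function.Injective q)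
    (hG : T.TriangleNonexpanding f G) : CurveNonexpandingOn q G T.verticesᶜ := by
  refine .of_locally fun p hp => ?_
  obtain hv | ho | ⟨i, k, x, hx, rfl⟩ := T.mem_vertices_or_openTriangles_or_openEdge p
  · exact absurd hv hp
  · exact ⟨T.openTriangles, isOpen_iUnion T.isOpen_image_Do, ho,
      h.curveNonexpandingOn_openTriangles hG⟩
  · obtain ⟨N, hN, hxN, hNfree⟩ := h.exists_isShortcutFree hq hx
    exact ⟨N, hN, hxN, h.curveNonexpandingOn_of_isShortcutFree hG hNfree⟩

lemma curveNonexpandingOn_univ (h : T.PreservesLength f q) (hq : Function.Injective q)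
    (hG : T.TriangleNonexpanding f G) : CurveNonexpandingOn q G univ :=
  .of_compl_finite hG.continuous T.finite_vertices (h.curveNonexpandingOn_compl_vertices hq hG)

end Triangulation.PreservesLength

/-! ### The glued metric -/

lemma exists_linearMap_dD_eq_dist (l : Set E2 → ℝ) :
    ∃ f : E2 →ₗ[ℝ] E2, ∀ x y, dD l x y = dist (f x) (f y) := by
  by_cases h : ∃ f : E2 →ₗ[ℝ] E2, Realizes f l
  · exact ⟨h.choose, fun x y => dif_pos h⟩
  · exact ⟨0, fun x y => (dif_neg h).trans (dist_self _).symm⟩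

lemma dD_nonneg (l : Set E2 → ℝ) (x y : E2) : 0 ≤ dD l x y := by
  obtain ⟨f, hf⟩ := exists_linearMap_dD_eq_dist l
  exact hf x y ▸ dist_nonneg

namespace Triangulation

variable (T : Triangulation S n) (l : Set S → ℝ)

lemma dTri_nonneg (i : Fin n) (p p' : S) : 0 ≤ dTri T l i p p' := by
  apply Real.sInf_nonneg
  rintro r ⟨x, -, y, -, -, -, rfl⟩
  exact dD_nonneg _ x y

lemma dTri_le_dD (i : Fin n) {x y : E2} (hx : x ∈ Dtri) (hy : y ∈ Dtri) :
    dTri T l i (T.σ i x) (T.σ i y) ≤ dD (lRes T l i) x y := by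
  refine csInf_le ⟨0, ?_⟩ ⟨x, hx, y, hy, rfl, rfl, rfl⟩
  rintro r ⟨x', -, y', -, -, -, rfl⟩
  exact dD_nonneg _ x' y'

lemma bddBelow_chainSums (p p' : S) : BddBelow (chainSums T l p p') := by
  refine ⟨0, ?_⟩
  rintro r ⟨k, c, idx, -, -, -, rfl⟩
  exact Finset.sum_nonneg fun j _ => T.dTri_nonneg l (idx j) (c j) (c (j + 1))

lemma zero_mem_chainSums_self (p : S) : 0 ∈ chainSums T l p p := by
  obtain ⟨i, -⟩ := T.exists_mem_image_Dtri p
  exact ⟨0, fun _ => p, fun _ => i, rfl, rfl, by simp, by simp⟩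

lemma dGlue_self_nonpos (p : S) : dGlue T l p p ≤ 0 :=
  csInf_le (T.bddBelow_chainSums l p p) (T.zero_mem_chainSums_self l p)

variable {T l}

lemma add_dTri_mem_chainSums {p₀ p p' : S} {r : ℝ} {i : Fin n} (hr : r ∈ chainSums T l p₀ p)
    (hp : p ∈ T.σ i '' Dtri) (hp' : p' ∈ T.σ i '' Dtri) :
    r + dTri T l i p p' ∈ chainSums T l p₀ p' := by
  obtain ⟨k, c, idx, rfl, rfl, hc, rfl⟩ := hr
  have hc' {j : ℕ} (hj : j ≤ k) : Function.update c (k + 1) p' j = c j :=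
    Function.update_of_ne (by omega) p' c
  have hidx {j : ℕ} (hj : j < k) : Function.update idx k i j = idx j :=
    Function.update_of_ne hj.ne i idx
  refine ⟨k + 1, Function.update c (k + 1) p', Function.update idx k i, hc' k.zero_le,
    Function.update_self .., fun j hj => ?_, ?_⟩
  · obtain hj | rfl := Nat.lt_succ_iff_lt_or_eq.1 hj
    · rw [hc' hj.le, hc' hj, hidx hj]
      exact hc j hj
    · rw [hc' le_rfl, Function.update_self, Function.update_self]
      exact ⟨hp, hp'⟩
  · rw [Finset.sum_range_succ, hc' le_rfl, Function.update_self, Function.update_self]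
    congr 1
    refine Finset.sum_congr rfl fun j hj => ?_
    have hj := Finset.mem_range.1 hj
    rw [hc' hj.le, hc' hj, hidx hj]

variable {F : Type*} [NormedAddCommGroup F] [NormedSpace ℝ F] {f : Fin n → E2 →ₗ[ℝ] F}

section T2Space

variable [T2Space S]

lemma isClosed_of_forall_subset {R : Set S}
    (hR : ∀ i, ∀ p ∈ T.σ i '' Dtri, p ∈ R → T.σ i '' Dtri ⊆ R) : IsClosed R := by
  have hRU : R = ⋃ i ∈ {i : Fin n | T.σ i '' Dtri ⊆ R}, T.σ i '' Dtri := by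
    refine Subset.antisymm (fun p hp => ?_) (iUnion₂_subset fun i hi => hi)
    obtain ⟨i, hi⟩ := T.exists_mem_image_Dtri p
    exact mem_biUnion (hR i p hi hp) hi
  rw [hRU]
  exact (toFinite _).isClosed_biUnion fun i _ =>
    (isCompact_Dtri.image_of_continuousOn (T.continuousOn i)).isClosed

variable [PreconnectedSpace S]

lemma chainSums_nonempty (p p' : S) : (chainSums T l p p').Nonempty := by
  let R : Set S := {p' | (chainSums T l p p').Nonempty}
  have hR (i) (p₁) (hp₁ : p₁ ∈ T.σ i '' Dtri) : p₁ ∈ R → T.σ i '' Dtri ⊆ R :=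
    fun ⟨_, hr⟩ _ hp₂ => ⟨_, add_dTri_mem_chainSums hr hp₁ hp₂⟩
  have hclopen : IsClopen R := ⟨isClosed_of_forall_subset hR,
    isClosed_compl_iff.1 (isClosed_of_forall_subset fun i p₁ hp₁ hp₁R p₂ hp₂ hp₂R =>
      hp₁R (hR i p₂ hp₂ hp₂R hp₁))⟩
  have hRuniv : R = univ := hclopen.eq_univ ⟨p, 0, T.zero_mem_chainSums_self l p⟩
  exact hRuniv.ge (mem_univ p')

lemma dGlue_le_add_dD (p : S) {i : Fin n} {x y : E2} (hx : x ∈ Dtri) (hy : y ∈ Dtri) :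
    dGlue T l p (T.σ i y) ≤ dGlue T l p (T.σ i x) + dD (lRes T l i) x y := by
  refine le_trans ?_ (add_le_add_right (T.dTri_le_dD l i hx hy) _)
  rw [← sub_le_iff_le_add]
  refine le_csInf (chainSums_nonempty p _) fun r hr => sub_le_iff_le_add.2 ?_
  exact csInf_le (T.bddBelow_chainSums l p _)
    (add_dTri_mem_chainSums hr (mem_image_of_mem _ hx) (mem_image_of_mem _ hy))

lemma triangleNonexpanding_dGlue (hf : ∀ i x y, dD (lRes T l i) x y = dist (f i x) (f i y))
    (p : S) : T.TriangleNonexpanding f (dGlue T l p) := by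
  intro i x hx y hy
  rw [edist_dist, edist_dist, Real.dist_eq]
  refine ENNReal.ofReal_le_ofReal (abs_sub_le_iff.2 ⟨?_, ?_⟩) <;> rw [sub_le_iff_le_add']
  · rw [dist_comm, ← hf]
    exact dGlue_le_add_dD p hy hx
  · rw [← hf]
    exact dGlue_le_add_dD p hx hy

end T2Space

variable {Y : Type*} [PseudoMetricSpace Y] {q : S → Y}

lemma TriangleNonexpanding.dist_le_dTri (hq : T.TriangleNonexpanding f q)
    (hf : ∀ i x y, dD (lRes T l i) x y = dist (f i x) (f i y)) {i : Fin n} {p p' : S}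
    (hp : p ∈ T.σ i '' Dtri) (hp' : p' ∈ T.σ i '' Dtri) :
    dist (q p) (q p') ≤ dTri T l i p p' := by
  obtain ⟨x₀, hx₀, hxp⟩ := hp
  obtain ⟨y₀, hy₀, hyp⟩ := hp'
  refine le_csInf ⟨_, x₀, hx₀, y₀, hy₀, hxp, hyp, rfl⟩ ?_
  rintro r ⟨x, hx, y, hy, rfl, rfl, rfl⟩
  rw [hf, dist_edist, dist_edist]
  exact ENNReal.toReal_mono (edist_ne_top _ _) (hq i x hx y hy)

lemma TriangleNonexpanding.dist_le_dGlue [T2Space S] [PreconnectedSpace S]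
    (hq : T.TriangleNonexpanding f q)
    (hf : ∀ i x y, dD (lRes T l i) x y = dist (f i x) (f i y)) (p p' : S) :
    dist (q p) (q p') ≤ dGlue T l p p' := by
  refine le_csInf (chainSums_nonempty p p') ?_
  rintro r ⟨k, c, idx, rfl, rfl, hc, rfl⟩
  exact dist_le_range_sum_of_dist_le (f := q ∘ c) k fun hj =>
    hq.dist_le_dTri hf (hc _ hj).1 (hc _ hj).2

end Triangulation

lemma exists_metricSpace_eq_dist {X : Type} {d : X → X → ℝ} (hd_eq : ∀ x y, d x y = 0 ↔ x = y)
    (hd_symm : ∀ x y, d x y = d y x) (hd_tri : ∀ x y z, d x z ≤ d x y + d y z) :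
    ∃ (Y : Type) (_ : MetricSpace Y) (q : X → Y), Function.Injective q ∧
      d = fun x y => dist (q x) (q y) :=
  ⟨X, { dist := d
        dist_self x := (hd_eq x x).2 rfl
        dist_comm := hd_symm
        dist_triangle := hd_tri
        eq_of_dist_eq_zero := (hd_eq _ _).1 }, id, Function.injective_id, rfl⟩

lemma Triangulation.PreservesLength.of_pathLen_eq {Y : Type} [PseudoMetricSpace Y]
    {T : Triangulation S n} {l : Set S → ℝ} {f : Fin n → E2 →ₗ[ℝ] E2} {q : S → Y}
    (hf : ∀ i x y, dD (lRes T l i) x y = dist (f i x) (f i y))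
    (hL : ∀ i, ∀ γ : ℝ → E2, ContinuousOn γ (Icc 0 1) → (∀ t ∈ Icc (0 : ℝ) 1, γ t ∈ Dtri) →
      pathLen (dD (lRes T l i)) γ = pathLen (fun x y => dist (q x) (q y)) (T.σ i ∘ γ)) :
    T.PreservesLength f q := by
  intro i g hg hgD
  have hfi : dD (lRes T l i) = fun x y => dist (f i x) (f i y) := funext₂ (hf i)
  have hLi := hL i g hg hgD
  rw [hfi] at hLi
  rw [← pathLen_dist_eq_eVariationOn, ← pathLen_dist_eq_eVariationOn]
  exact hLi

/-- Theorem 4.1 (b): if `d` is an intrinsic metric on `S` such that for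
every `i ∈ I` and every continuous curve `γ : [0,1] → Dtri` one has
`L(γ, d[l^{(i)}]) = L(σᵢ ∘ γ, d)`, then `d = d[l]`: the glued metric `d[l]` is the unique
intrinsic metric on `S` preserving the lengths of the curves on the Euclidean triangles. -/
theorem eq_dGlue_of_intrinsic_length_preserving
    {S : Type} [TopologicalSpace S] [CompactSpace S] [T2Space S] [ConnectedSpace S]
    {n : ℕ} (T : Triangulation S n) (l : Set S → ℝ) (hl : TriIneqT T l)
    (d : S → S → ℝ)
    (hd_eq : ∀ x y : S, d x y = 0 ↔ x = y)
    (hd_symm : ∀ x y : S, d x y = d y x)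
    (hd_tri : ∀ x y z : S, d x z ≤ d x y + d y z)
    (hd_intrinsic : ∀ x y : S, ENNReal.ofReal (d x y) =
      ⨅ (γ : ℝ → S) (_ : ContinuousOn γ (Icc (0:ℝ) 1) ∧ γ 0 = x ∧ γ 1 = y),
        pathLen d γ)
    (hL : ∀ i : Fin n, ∀ γ : ℝ → E2,
      ContinuousOn γ (Icc (0:ℝ) 1) → (∀ t ∈ Icc (0:ℝ) 1, γ t ∈ Dtri) →
      pathLen (dD (lRes T l i)) γ = pathLen d (T.σ i ∘ γ)) :
    ∀ x y : S, d x y = dGlue T l x y := by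
  obtain ⟨Y, _, q, hq, rfl⟩ := exists_metricSpace_eq_dist hd_eq hd_symm hd_tri
  choose f hf using fun i => exists_linearMap_dD_eq_dist (lRes T l i)
  have hpres : T.PreservesLength f q := .of_pathLen_eq hf hL
  intro x y
  refine le_antisymm (hpres.triangleNonexpanding.dist_le_dGlue hf x y)
    ((ENNReal.ofReal_le_ofReal_iff dist_nonneg).1 ?_)
  rw [hd_intrinsic x y]
  refine le_iInf₂ ?_
  rintro γ ⟨hγ, rfl, rfl⟩
  calc ENNReal.ofReal (dGlue T l (γ 0) (γ 1))
      ≤ edist (dGlue T l (γ 0) (γ 0)) (dGlue T l (γ 0) (γ 1)) := by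
        rw [edist_comm, edist_dist]
        exact ENNReal.ofReal_le_ofReal
          ((le_sub_self_iff _).2 (T.dGlue_self_nonpos l _) |>.trans (le_abs_self _))
    _ ≤ eVariationOn (q ∘ γ) (Icc 0 1) :=
        hpres.curveNonexpandingOn_univ hq (Triangulation.triangleNonexpanding_dGlue hf (γ 0))
          zero_le_one hγ (mapsTo_univ γ _)
    _ = pathLen (fun x y => dist (q x) (q y)) γ := (pathLen_dist_eq_eVariationOn (q ∘ γ)).symm
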